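/- Let n ∈ ℕ, p⃗, q⃗ ∈ [1,∞)^n and α⃗ ∈ ℝⁿ. Then the dual space of Ė^{α⃗,p⃗}_{q⃗}(ℝⁿ) is Ė^{-α⃗,p⃗'}_{q⃗'}(ℝⁿ) in the following sense: (i) for every g ∈ Ė^{-α⃗,p⃗'}_{q⃗'}(ℝⁿ), the linear functional J_g(f) := ∫_{ℝⁿ} f(x) g(x) dx is bounded on Ė^{α⃗,p⃗}_{q⃗}(ℝⁿ); (ii) conversely, every continuous linear functional on Ė^{α⃗,p⃗}_{q⃗}(ℝⁿ) equals J_g for a unique g ∈ Ė^{-α⃗,p⃗'}_{q⃗'}(ℝⁿ); moreover, ‖g‖_{Ė^{-α⃗,p⃗'}_{q⃗'}(ℝⁿ)} equals the operator norm of J_g on Ė^{α⃗,p⃗}_{q⃗}(ℝⁿ). -/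

import Mathlib

open MeasureTheory ENNReal Filter

noncomputable section

/-- The dyadic annulus `R_k = (-2^k, 2^k) \ (-2^(k-1), 2^(k-1))` in `ℝ`. -/
def herzRing (k : ℤ) : Set ℝ :=
  Set.Ioo (-(2 : ℝ) ^ k) ((2 : ℝ) ^ k) \ Set.Ioo (-(2 : ℝ) ^ (k - 1)) ((2 : ℝ) ^ (k - 1))

/-- The `L^q` "norm" (valued in `ℝ≥0∞`) of an `ℝ≥0∞`-valued function on a set `s ⊆ ℝ`,
with the usual modification when `q = ∞`. -/
def lqNormOn (q : ℝ≥0∞) (s : Set ℝ) (g : ℝ → ℝ≥0∞) : ℝ≥0∞ :=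
  if q = ∞ then essSup (s.indicator g) volume
  else (∫⁻ x in s, g x ^ q.toReal) ^ (1 / q.toReal)

/-- The `l^p` norm over `ℤ` of an `ℝ≥0∞`-valued sequence, with the usual modification
when `p = ∞`. -/
def lpZNorm (p : ℝ≥0∞) (a : ℤ → ℝ≥0∞) : ℝ≥0∞ :=
  if p = ∞ then ⨆ k, a k
  else (∑' k : ℤ, a k ^ p.toReal) ^ (1 / p.toReal)

/-- The one-dimensional Herz norm `K^{α,p}_q` of an `ℝ≥0∞`-valued function on `ℝ`. -/
def herzNorm1 (α : ℝ) (p q : ℝ≥0∞) (g : ℝ → ℝ≥0∞) : ℝ≥0∞ :=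
  lpZNorm p fun k => ENNReal.ofReal ((2 : ℝ) ^ ((k : ℝ) * α)) * lqNormOn q (herzRing k) g

/-- The mixed-norm Herz norm on `ℝⁿ` of an `ℝ≥0∞`-valued function: the Herz norm
`K^{α_1,p_1}_{q_1}` is applied in the first variable, then `K^{α_2,p_2}_{q_2}` in the
second variable, …, and finally `K^{α_n,p_n}_{q_n}` in the last variable. -/
def mixedHerzNormE : (n : ℕ) → (Fin n → ℝ) → (Fin n → ℝ≥0∞) → (Fin n → ℝ≥0∞) →
    ((Fin n → ℝ) → ℝ≥0∞) → ℝ≥0∞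
  | 0, _, _, _, f => f fun i => i.elim0
  | n + 1, α, p, q, f =>
    herzNorm1 (α (Fin.last n)) (p (Fin.last n)) (q (Fin.last n)) fun xlast =>
      mixedHerzNormE n (Fin.init α) (Fin.init p) (Fin.init q) fun y => f (Fin.snoc y xlast)

/-- The mixed-norm Herz norm `‖f‖_{Ė^{α,p}_q(ℝⁿ)}` of a complex-valued function on `ℝⁿ`. -/
def herzNormC (n : ℕ) (α : Fin n → ℝ) (p q : Fin n → ℝ≥0∞) (f : (Fin n → ℝ) → ℂ) : ℝ≥0∞ :=
  mixedHerzNormE n α p q fun x => (‖f x‖₊ : ℝ≥0∞)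

/-- `I_m = (-2^m, -2^{-m}] ∪ [2^{-m}, 2^m)`. -/
def herzI (m : ℕ) : Set ℝ :=
  Set.Ioc (-(2 : ℝ) ^ (m : ℤ)) (-(2 : ℝ) ^ (-(m : ℤ))) ∪
    Set.Ico ((2 : ℝ) ^ (-(m : ℤ))) ((2 : ℝ) ^ (m : ℤ))

/-- `A_m = I_m^n ⊆ ℝⁿ`. -/
def herzA (n m : ℕ) : Set (Fin n → ℝ) := Set.univ.pi fun _ => herzI m

/-- The class `H(ℝⁿ)` of simple functions built from finitely many pairwise disjoint
parallelepipeds contained in some `A_m`. -/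
def IsHSimple (n : ℕ) (f : (Fin n → ℝ) → ℂ) : Prop :=
  ∃ (m N : ℕ) (a : Fin N → ℂ) (E : Fin N → Fin n → Set ℝ),
    (∀ k i, MeasurableSet (E k i)) ∧
    (∀ k, Set.univ.pi (E k) ⊆ herzA n m) ∧
    (Pairwise fun k l => Disjoint (Set.univ.pi (E k)) (Set.univ.pi (E l))) ∧
    f = fun x => ∑ k, (Set.univ.pi (E k)).indicator (fun _ => a k) x

/-- The Euclidean ball `B(x,r)` in `ℝⁿ`. -/
def eucBall (n : ℕ) (x : Fin n → ℝ) (r : ℝ) : Set (Fin n → ℝ) :=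
  {y | ∑ i, (y i - x i) ^ 2 < r ^ 2}

/-- The (uncentered) maximal operator in the `k`-th variable. -/
def maxVar (n : ℕ) (k : Fin n) (g : (Fin n → ℝ) → ℝ≥0∞) : (Fin n → ℝ) → ℝ≥0∞ :=
  fun x => ⨆ (a : ℝ) (b : ℝ) (_ : x k ∈ Set.Ioo a b),
    (volume (Set.Ioo a b))⁻¹ * ∫⁻ y in Set.Ioo a b, g (Function.update x k y)

/-- The centered Hardy–Littlewood maximal operator on `ℝⁿ`. -/
def centeredMax (n : ℕ) (g : (Fin n → ℝ) → ℝ≥0∞) : (Fin n → ℝ) → ℝ≥0∞ :=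
  fun x => ⨆ (r : ℝ) (_ : 0 < r),
    (volume (eucBall n x r))⁻¹ * ∫⁻ y in eucBall n x r, g y

/-- The composition `M_n ∘ ⋯ ∘ M_1` of the maximal operators in each variable. -/
def iteratedMax (n : ℕ) (g : (Fin n → ℝ) → ℝ≥0∞) : (Fin n → ℝ) → ℝ≥0∞ :=
  (List.ofFn fun k : Fin n => maxVar n k).foldl (fun h F => F h) g

/-- The iterated maximal operator `ℳ_t(f) = [M_n ⋯ M_1(|f|^t)]^{1/t}`. -/
def iterMaxPow (n : ℕ) (t : ℝ) (f : (Fin n → ℝ) → ℂ) : (Fin n → ℝ) → ℝ≥0∞ :=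
  fun x => iteratedMax n (fun y => (‖f y‖₊ : ℝ≥0∞) ^ t) x ^ (1 / t)

/-- The `l^r`-Herz type mixed norm of a sequence of functions on `ℝⁿ`. -/
def herzSeqNorm (n : ℕ) (r : ℝ≥0∞) (α : Fin n → ℝ) (p q : Fin n → ℝ≥0∞)
    (F : ℤ → (Fin n → ℝ) → ℂ) : ℝ≥0∞ :=
  mixedHerzNormE n α p q fun x => lpZNorm r fun j => (‖F j x‖₊ : ℝ≥0∞)

/-- `N` is a ball quasi-Banach function norm on (nonnegative extended-real-valued)
measurable functions on `ℝⁿ`. -/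
def IsBQBFNorm (n : ℕ) (N : ((Fin n → ℝ) → ℝ≥0∞) → ℝ≥0∞) : Prop :=
  (∀ f : (Fin n → ℝ) → ℝ≥0∞, Measurable f → N f = 0 → f =ᵐ[volume] 0) ∧
  (∀ f g : (Fin n → ℝ) → ℝ≥0∞, Measurable f → Measurable g →
    (∀ᵐ x ∂volume, g x ≤ f x) → N g ≤ N f) ∧
  (∀ (fm : ℕ → (Fin n → ℝ) → ℝ≥0∞) (f : (Fin n → ℝ) → ℝ≥0∞),
    (∀ m, Measurable (fm m)) → Measurable f →
    (∀ᵐ x ∂volume, Monotone (fun m => fm m x) ∧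
      Tendsto (fun m => fm m x) atTop (nhds (f x))) →
    Monotone (fun m => N (fm m)) ∧ Tendsto (fun m => N (fm m)) atTop (nhds (N f))) ∧
  (∀ (x : Fin n → ℝ) (r : ℝ), 0 < r →
    N ((eucBall n x r).indicator fun _ => (1 : ℝ≥0∞)) ≠ ∞)

/-- `N` is a ball Banach function norm: a ball quasi-Banach function norm that moreover
satisfies the triangle inequality and locally dominates the `L¹` norm. -/
def IsBallBanachNorm (n : ℕ) (N : ((Fin n → ℝ) → ℝ≥0∞) → ℝ≥0∞) : Prop :=
  IsBQBFNorm n N ∧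
  (∀ f g : (Fin n → ℝ) → ℝ≥0∞, Measurable f → Measurable g → N (f + g) ≤ N f + N g) ∧
  (∀ (x : Fin n → ℝ) (r : ℝ), 0 < r → ∃ C : ℝ≥0∞, 0 < C ∧ C ≠ ∞ ∧
    ∀ f : (Fin n → ℝ) → ℝ≥0∞, Measurable f → (∫⁻ y in eucBall n x r, f y) ≤ C * N f)

/-- The associate (Köthe dual) norm of a function norm `N`. -/
def assocNormOf (n : ℕ) (N : ((Fin n → ℝ) → ℝ≥0∞) → ℝ≥0∞)
    (f : (Fin n → ℝ) → ℝ≥0∞) : ℝ≥0∞ :=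
  ⨆ (g : (Fin n → ℝ) → ℝ≥0∞) (_ : Measurable g) (_ : N g = 1), ∫⁻ x, f x * g x

/-- The `θ`-convexification of a function norm: `‖f‖_{X^θ} = ‖|f|^θ‖_X^{1/θ}`
(here stated with `θ` in place of `1/p`, so `X^{1/p}` is `convexPow n (1/p) N`). -/
def convexPow (n : ℕ) (θ : ℝ) (N : ((Fin n → ℝ) → ℝ≥0∞) → ℝ≥0∞)
    (f : (Fin n → ℝ) → ℝ≥0∞) : ℝ≥0∞ :=
  N (fun x => f x ^ θ) ^ (1 / θ)

/-- The associate space norm of the mixed-norm Herz space, for complex-valued functions. -/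
def herzAssocNormC (n : ℕ) (α : Fin n → ℝ) (p q : Fin n → ℝ≥0∞)
    (f : (Fin n → ℝ) → ℂ) : ℝ≥0∞ :=
  ⨆ (g : (Fin n → ℝ) → ℂ) (_ : Measurable g) (_ : herzNormC n α p q g = 1),
    ∫⁻ x, (‖f x * g x‖₊ : ℝ≥0∞)

/-!
Call `ρ'` the Köthe dual of `ρ` if `ρ' g` is the supremum of `∫ f g` over the `f` with `ρ f ≤ 1`.
The Herz norm is a weighted `ℓ^p` norm of `L^q` norms over annuli which partition the line, and the
mixed norm iterates Herz norms; so, starting from `L^p`, one needs that Köthe duality passes to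
iterated norms. One bound is Hölder's inequality applied twice. For the other one, a near-extremizer
for the outer norm has to be multiplied by near-extremizers for the inner norm, chosen measurably in
the outer variable. This is why duality is formulated for families of norms depending measurably on
a parameter, with measurable selection as part of the definition.

For a bounded functional `T` and a strictly positive `W` of finite norm, `A ↦ T (1_A W)` is a
complex measure, because the norm is order continuous. Let `g` be its density divided by `W`. Then
`T f = ∫ f g` when `f` is `W` times a simple function, hence by dominated convergence when `f g` is
integrable. Such `f` suffice to bound the dual norm of `g` by the norm of `T`, and a finite dual
norm makes every `f g` integrable.
-/

open ProbabilityTheory Function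
open scoped NNReal Topology

variable {X Y Z : Type*} [MeasurableSpace X] [MeasurableSpace Y] [MeasurableSpace Z]

/-- A monotone, homogeneous, order continuous function norm `ρ` on `(X, μ)` which satisfies
Hölder's inequality with the function norm `ρ'`. Norms act on arbitrary `ℝ≥0∞`-valued functions;
only their values on measurable functions matter. -/
structure IsHolderPair (μ : Measure X) (ρ ρ' : (X → ℝ≥0∞) → ℝ≥0∞) : Prop where
  mono : ∀ ⦃f g : X → ℝ≥0∞⦄, f ≤ᵐ[μ] g → ρ f ≤ ρ g
  const_mul_le : ∀ (c : ℝ≥0∞) ⦃f : X → ℝ≥0∞⦄, Measurable f → ρ (fun x ↦ c * f x) ≤ c * ρ f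
  ae_lt_top : ∀ ⦃f : X → ℝ≥0∞⦄, Measurable f → ρ f ≠ ∞ → ∀ᵐ x ∂μ, f x < ∞
  tendsto_zero_of_antitone : ∀ ⦃f : ℕ → X → ℝ≥0∞⦄, (∀ n, Measurable (f n)) → Antitone f →
    ρ (f 0) ≠ ∞ → (∀ᵐ x ∂μ, Tendsto (f · x) atTop (𝓝 0)) → Tendsto (fun n ↦ ρ (f n)) atTop (𝓝 0)
  lintegral_mul_le : ∀ ⦃f g : X → ℝ≥0∞⦄, Measurable f → Measurable g →
    ∫⁻ x, f x * g x ∂μ ≤ ρ f * ρ' g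

/-- `ρ'` is the Köthe dual norm of `ρ` on `(X, μ)`, and `ρ` is finite on some strictly positive
function. -/
structure IsKotheDualPair (μ : Measure X) (ρ ρ' : (X → ℝ≥0∞) → ℝ≥0∞) : Prop
    extends IsHolderPair μ ρ ρ' where
  dual_le : ∀ ⦃g : X → ℝ≥0∞⦄ ⦃C : ℝ≥0∞⦄, Measurable g →
    (∀ f, Measurable f → ρ f ≤ 1 → ∫⁻ x, f x * g x ∂μ ≤ C) → ρ' g ≤ C
  exists_weight : ∃ w : X → ℝ≥0, Measurable w ∧ (∀ x, 0 < w x) ∧ ρ (fun x ↦ w x) ≤ 1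

/-- A measurable field of Köthe dual pairs over a kernel `κ`: duality holds fibrewise, and the
functions witnessing it can be selected measurably in the parameter. In
`exists_le_lintegral_mul`, strict inequality is only asked where `H` does not vanish, so that `H`
may be cut off to a measurable set of parameters. -/
structure IsKotheDualField (κ : Kernel Y X) (ρ ρ' : Y → (X → ℝ≥0∞) → ℝ≥0∞) : Prop where
  isHolderPair : ∀ y, IsHolderPair (κ y) (ρ y) (ρ' y)
  measurable : ∀ ⦃F : Y → X → ℝ≥0∞⦄, Measurable (uncurry F) → Measurable fun y ↦ ρ y (F y)
  measurable_dual : ∀ ⦃F : Y → X → ℝ≥0∞⦄, Measurable (uncurry F) → Measurable fun y ↦ ρ' y (F y)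
  exists_le_lintegral_mul : ∀ ⦃G : Y → X → ℝ≥0∞⦄ ⦃H : Y → ℝ≥0∞⦄, Measurable (uncurry G) →
    Measurable H → (∀ y, H y ≠ 0 → H y < ρ' y (G y)) →
    ∃ F : Y → X → ℝ≥0∞, Measurable (uncurry F) ∧ (∀ y, ρ y (F y) ≤ 1) ∧
      ∀ y, H y ≤ ∫⁻ x, F y x * G y x ∂κ y
  exists_weight : ∃ w : Y → X → ℝ≥0, Measurable (uncurry w) ∧ (∀ y x, 0 < w y x) ∧
    ∀ y, ρ y (fun x ↦ w y x) ≤ 1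

lemma IsKotheDualPair.dual_iSup_le {μ : Measure X} {ρ ρ' : (X → ℝ≥0∞) → ℝ≥0∞}
    (h : IsKotheDualPair μ ρ ρ') {g : ℕ → X → ℝ≥0∞} (hg : ∀ n, Measurable (g n))
    (hmono : Monotone g) : ρ' (fun x ↦ ⨆ n, g n x) ≤ ⨆ n, ρ' (g n) := by
  refine h.dual_le (.iSup hg) fun u hu hu1 ↦ ?_
  simp_rw [ENNReal.mul_iSup]
  rw [lintegral_iSup (f := fun n x ↦ u x * g n x) (fun n ↦ hu.mul (hg n))
    fun m n hmn x ↦ mul_le_mul_right (hmono hmn x) _]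
  gcongr with n
  exact (h.lintegral_mul_le hu (hg n)).trans (mul_le_of_le_one_left' hu1)

lemma IsKotheDualField.isKotheDualPair {κ : Kernel Y X} {ρ ρ' : Y → (X → ℝ≥0∞) → ℝ≥0∞}
    (h : IsKotheDualField κ ρ ρ') (y : Y) : IsKotheDualPair (κ y) (ρ y) (ρ' y) where
  toIsHolderPair := h.isHolderPair y
  dual_le g C hg hC := by
    refine le_of_forall_lt_imp_le_of_dense fun c hc ↦ ?_
    have hG : Measurable (uncurry fun _ : Y ↦ g) := hg.comp measurable_snd
    obtain ⟨F, hF, hF1, hFH⟩ := h.exists_le_lintegral_mul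
      (H := {y' | c < ρ' y' g}.indicator fun _ ↦ c) hG
      (measurable_const.indicator (measurableSet_lt measurable_const (h.measurable_dual hG)))
      fun y' hy' ↦ by
        have hmem := Set.mem_of_indicator_ne_zero hy'
        rwa [Set.indicator_of_mem hmem]
    calc c = {y' | c < ρ' y' g}.indicator (fun _ ↦ c) y := by simp [hc]
      _ ≤ ∫⁻ x, F y x * g x ∂κ y := hFH y
      _ ≤ C := hC _ hF.of_uncurry_left (hF1 y)
  exists_weight :=
    let ⟨w, hw, hpos, hw1⟩ := h.exists_weight
    ⟨w y, hw.of_uncurry_left, hpos y, hw1 y⟩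

/-! ### Measurable selection -/

lemma exists_measurable_nat_lt_of_lt_iSup {H : Y → ℝ≥0∞} {A : ℕ → Y → ℝ≥0∞} (hH : Measurable H)
    (hA : ∀ n, Measurable (A n)) (hlt : ∀ y, H y ≠ 0 → H y < ⨆ n, A n y) :
    ∃ N : Y → ℕ, Measurable N ∧ ∀ y, H y ≠ 0 → H y < A (N y) y := by
  classical
  have hex : ∀ y, ∃ n, H y ≠ 0 → H y < A n y := fun y ↦ by
    by_cases hy : H y = 0
    · exact ⟨0, fun h ↦ (h hy).elim⟩
    · exact (lt_iSup_iff.1 (hlt y hy)).imp fun n hn _ ↦ hn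
  refine ⟨fun y ↦ Nat.find (hex y), measurable_find hex fun n ↦ ?_, fun y ↦ Nat.find_spec (hex y)⟩
  simp_rw [imp_iff_not_or, not_not, Set.ofPred_or]
  exact (measurableSet_eq_fun hH measurable_const).union (measurableSet_lt hH (hA n))

lemma measurable_uncurry_natIndex {N : Y → ℕ} (hN : Measurable N) {F : ℕ → Y → X → ℝ≥0∞}
    (hF : ∀ n, Measurable (uncurry (F n))) : Measurable (uncurry fun y ↦ F (N y) y) :=
  (measurable_from_prod_countable_right (f := fun q : ℕ × Y × X ↦ F q.1 q.2.1 q.2.2) hF).comp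
    ((hN.comp measurable_fst).prodMk measurable_id)

/-- A sequence of bounded functions increasing to the identity, with values strictly below the
identity away from their zeros. -/
def strictApprox (n : ℕ) (a : ℝ≥0∞) : ℝ≥0∞ := (1 - (n + 1 : ℝ≥0∞)⁻¹) * min a n

lemma measurable_strictApprox (n : ℕ) : Measurable (strictApprox n) :=
  (measurable_id.min measurable_const).const_mul _

lemma monotone_strictApprox : Monotone strictApprox := fun m n hmn a ↦ by
  unfold strictApprox
  gcongr

lemma strictApprox_lt {n : ℕ} {a : ℝ≥0∞} (h : strictApprox n a ≠ 0) : strictApprox n a < a := by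
  have hmin : min a n ≠ 0 := right_ne_zero_of_mul h
  calc strictApprox n a = min a n * (1 - (n + 1 : ℝ≥0∞)⁻¹) := mul_comm _ _
    _ < min a n * 1 := ENNReal.mul_lt_mul_right hmin
        (min_lt_of_right_lt (natCast_lt_top n)).ne
        (ENNReal.sub_lt_self one_ne_top one_ne_zero (by simp))
    _ ≤ a := by simp

lemma iSup_strictApprox (a : ℝ≥0∞) : ⨆ n, strictApprox n a = a := by
  have hfactor : Tendsto (fun n : ℕ ↦ 1 - (n + 1 : ℝ≥0∞)⁻¹) atTop (𝓝 1) := by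
    simpa using ENNReal.Tendsto.sub tendsto_const_nhds
      ((tendsto_add_atTop_iff_nat 1).2 ENNReal.tendsto_inv_nat_nhds_zero) (.inl one_ne_top)
  have hmin : Tendsto (fun n : ℕ ↦ min a n) atTop (𝓝 a) := by
    simpa using tendsto_const_nhds.min ENNReal.tendsto_nat_nhds_top
  refine iSup_eq_of_tendsto (fun m n hmn ↦ monotone_strictApprox hmn a) ?_
  simpa [strictApprox] using ENNReal.Tendsto.mul hfactor (.inl one_ne_zero) hmin (.inr one_ne_top)

lemma IsKotheDualField.exists_approx_lt_dual {κ : Kernel Y X} {ρ ρ' : Y → (X → ℝ≥0∞) → ℝ≥0∞}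
    (h : IsKotheDualField κ ρ ρ') {G : Y → X → ℝ≥0∞} {H : Y → ℝ≥0∞}
    (hG : Measurable (uncurry G)) (hH : Measurable H) (hlt : ∀ y, H y ≠ 0 → H y < ρ' y (G y)) :
    ∃ R : Y → X → ℝ≥0∞, Measurable (uncurry R) ∧ (∀ y x, R y x ≠ 0 → R y x < G y x) ∧
      ∀ y, H y ≠ 0 → H y < ρ' y (R y) := by
  have happrox n : Measurable (uncurry fun y x ↦ strictApprox n (G y x)) :=
    (measurable_strictApprox n).comp hG
  have hiSup y : ρ' y (G y) ≤ ⨆ n, ρ' y fun x ↦ strictApprox n (G y x) := by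
    have := (h.isKotheDualPair y).dual_iSup_le (g := fun n x ↦ strictApprox n (G y x))
      (fun n ↦ (happrox n).of_uncurry_left) fun m n hmn x ↦ monotone_strictApprox hmn (G y x)
    simpa only [iSup_strictApprox] using this
  obtain ⟨N, hN, hNlt⟩ := exists_measurable_nat_lt_of_lt_iSup hH
    (fun n ↦ h.measurable_dual (happrox n)) fun y hy ↦ (hlt y hy).trans_le (hiSup y)
  exact ⟨fun y x ↦ strictApprox (N y) (G y x), measurable_uncurry_natIndex hN happrox,
    fun _ _ h ↦ strictApprox_lt h, hNlt⟩

/-! ### Iterated norms -/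

/-- The iterated norm on `Y × X`: first `ρ` in the variable `x`, with parameter `(z, y)`, then `σ`
in the variable `y`, with parameter `z`. -/
def iteratedNorm (σ : Z → (Y → ℝ≥0∞) → ℝ≥0∞) (ρ : Z × Y → (X → ℝ≥0∞) → ℝ≥0∞) (z : Z)
    (f : Y × X → ℝ≥0∞) : ℝ≥0∞ :=
  σ z fun y ↦ ρ (z, y) fun x ↦ f (y, x)

section IteratedNorm

variable {κ : Kernel Z Y} {η : Kernel (Z × Y) X} [IsSFiniteKernel κ] [IsSFiniteKernel η]
  {σ σ' : Z → (Y → ℝ≥0∞) → ℝ≥0∞} {ρ ρ' : Z × Y → (X → ℝ≥0∞) → ℝ≥0∞}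

lemma measurable_section {F : Z → Y × X → ℝ≥0∞} (hF : Measurable (uncurry F)) :
    Measurable (uncurry fun (p : Z × Y) (x : X) ↦ F p.1 (p.2, x)) :=
  hF.comp (by fun_prop : Measurable fun q : (Z × Y) × X ↦ (q.1.1, (q.1.2, q.2)))

lemma measurable_section_norm
    (hρ : ∀ ⦃F : Z × Y → X → ℝ≥0∞⦄, Measurable (uncurry F) → Measurable fun p ↦ ρ p (F p))
    {F : Z → Y × X → ℝ≥0∞} (hF : Measurable (uncurry F)) :
    Measurable (uncurry fun z y ↦ ρ (z, y) fun x ↦ F z (y, x)) :=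
  hρ (measurable_section hF)

lemma measurable_section_norm_apply
    (hρ : ∀ ⦃F : Z × Y → X → ℝ≥0∞⦄, Measurable (uncurry F) → Measurable fun p ↦ ρ p (F p))
    {f : Y × X → ℝ≥0∞} (hf : Measurable f) (z : Z) :
    Measurable fun y ↦ ρ (z, y) fun x ↦ f (y, x) :=
  (measurable_section_norm hρ (F := fun _ ↦ f) (hf.comp measurable_snd)).of_uncurry_left (x := z)

namespace IsKotheDualField

lemma isHolderPair_compProd (hσ : IsKotheDualField κ σ σ') (hρ : IsKotheDualField η ρ ρ')
    (z : Z) : IsHolderPair ((κ ⊗ₖ η) z) (iteratedNorm σ ρ z) (iteratedNorm σ' ρ' z) where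
  mono f g hfg := (hσ.isHolderPair z).mono <| (Kernel.ae_ae_of_ae_compProd hfg).mono fun y hy ↦
    (hρ.isHolderPair (z, y)).mono hy
  const_mul_le c f hf :=
    ((hσ.isHolderPair z).mono <| ae_of_all _ fun y ↦
      (hρ.isHolderPair (z, y)).const_mul_le c (hf.comp measurable_prodMk_left)).trans <|
    (hσ.isHolderPair z).const_mul_le c (measurable_section_norm_apply hρ.measurable hf z)
  ae_lt_top f hf hfin := by
    refine (Kernel.ae_compProd_iff (measurableSet_lt hf measurable_const)).2 ?_
    filter_upwards [(hσ.isHolderPair z).ae_lt_top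
      (measurable_section_norm_apply hρ.measurable hf z) hfin] with y hy
    exact (hρ.isHolderPair (z, y)).ae_lt_top (hf.comp measurable_prodMk_left) hy.ne
  tendsto_zero_of_antitone f hf hanti hfin hlim := by
    have hmeas n := measurable_section_norm_apply hρ.measurable (hf n) z
    refine (hσ.isHolderPair z).tendsto_zero_of_antitone hmeas
      (fun m n hmn y ↦ (hρ.isHolderPair (z, y)).mono (ae_of_all _ fun x ↦ hanti hmn (y, x)))
      hfin ?_
    filter_upwards [Kernel.ae_ae_of_ae_compProd hlim,
      (hσ.isHolderPair z).ae_lt_top (hmeas 0) hfin] with y hy hy_fin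
    exact (hρ.isHolderPair (z, y)).tendsto_zero_of_antitone
      (fun n ↦ (hf n).comp measurable_prodMk_left) (fun m n hmn x ↦ hanti hmn (y, x)) hy_fin.ne hy
  lintegral_mul_le f g hf hg := by
    rw [Kernel.lintegral_compProd _ _ _ (hf.fun_mul hg)]
    refine (lintegral_mono fun y ↦ (hρ.isHolderPair (z, y)).lintegral_mul_le
      (hf.comp measurable_prodMk_left) (hg.comp measurable_prodMk_left)).trans ?_
    exact (hσ.isHolderPair z).lintegral_mul_le (measurable_section_norm_apply hρ.measurable hf z)
      (measurable_section_norm_apply hρ.measurable_dual hg z)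

lemma exists_le_lintegral_mul_compProd (hσ : IsKotheDualField κ σ σ')
    (hρ : IsKotheDualField η ρ ρ') {G : Z → Y × X → ℝ≥0∞} {H : Z → ℝ≥0∞}
    (hG : Measurable (uncurry G)) (hH : Measurable H)
    (hlt : ∀ z, H z ≠ 0 → H z < iteratedNorm σ' ρ' z (G z)) :
    ∃ F : Z → Y × X → ℝ≥0∞, Measurable (uncurry F) ∧ (∀ z, iteratedNorm σ ρ z (F z) ≤ 1) ∧
      ∀ z, H z ≤ ∫⁻ p, F z p * G z p ∂(κ ⊗ₖ η) z := by
  obtain ⟨r, hr, hrG, hHr⟩ :=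
    hσ.exists_approx_lt_dual (measurable_section_norm hρ.measurable_dual hG) hH hlt
  obtain ⟨B, hB, hB1, hrB⟩ := hρ.exists_le_lintegral_mul (measurable_section hG) hr
    fun p ↦ hrG p.1 p.2
  obtain ⟨A, hA, hA1, hHA⟩ := hσ.exists_le_lintegral_mul hr hH hHr
  have hBzy z y : Measurable (B (z, y)) := hB.of_uncurry_left
  have hGzy z y : Measurable fun x ↦ G z (y, x) :=
    (measurable_section hG).of_uncurry_left (x := (z, y))
  have hF : Measurable (uncurry fun z (p : Y × X) ↦ A z p.1 * B (z, p.1) p.2) :=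
    (hA.comp (by fun_prop : Measurable fun q : Z × Y × X ↦ (q.1, q.2.1))).mul
      (hB.comp (by fun_prop : Measurable fun q : Z × Y × X ↦ ((q.1, q.2.1), q.2.2)))
  refine ⟨fun z p ↦ A z p.1 * B (z, p.1) p.2, hF, fun z ↦ ?_, fun z ↦ ?_⟩
  · refine ((hσ.isHolderPair z).mono (ae_of_all _ fun y ↦ ?_)).trans (hA1 z)
    exact ((hρ.isHolderPair (z, y)).const_mul_le _ (hBzy z y)).trans
      (mul_le_of_le_one_right' (hB1 (z, y)))
  · calc H z ≤ ∫⁻ y, A z y * r z y ∂κ z := hHA z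
      _ ≤ ∫⁻ y, A z y * ∫⁻ x, B (z, y) x * G z (y, x) ∂η (z, y) ∂κ z := by
        gcongr with y
        exact hrB (z, y)
      _ = ∫⁻ y, ∫⁻ x, A z y * B (z, y) x * G z (y, x) ∂η (z, y) ∂κ z := by
        simp_rw [mul_assoc]
        refine lintegral_congr fun y ↦ (lintegral_const_mul _ ((hBzy z y).mul (hGzy z y))).symm
      _ = ∫⁻ p, A z p.1 * B (z, p.1) p.2 * G z p ∂(κ ⊗ₖ η) z :=
        (Kernel.lintegral_compProd _ _ _ (hF.of_uncurry_left.mul hG.of_uncurry_left)).symm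

lemma compProd (hσ : IsKotheDualField κ σ σ') (hρ : IsKotheDualField η ρ ρ') :
    IsKotheDualField (κ ⊗ₖ η) (iteratedNorm σ ρ) (iteratedNorm σ' ρ') where
  isHolderPair := hσ.isHolderPair_compProd hρ
  measurable _ hF := hσ.measurable (measurable_section_norm hρ.measurable hF)
  measurable_dual _ hF := hσ.measurable_dual (measurable_section_norm hρ.measurable_dual hF)
  exists_le_lintegral_mul _ _ hG hH hlt := hσ.exists_le_lintegral_mul_compProd hρ hG hH hlt
  exists_weight := by
    obtain ⟨v, hv, hv0, hv1⟩ := hσ.exists_weight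
    obtain ⟨w, hw, hw0, hw1⟩ := hρ.exists_weight
    refine ⟨fun z p ↦ v z p.1 * w (z, p.1) p.2,
      (hv.comp (by fun_prop : Measurable fun q : Z × Y × X ↦ (q.1, q.2.1))).mul
        (hw.comp (by fun_prop : Measurable fun q : Z × Y × X ↦ ((q.1, q.2.1), q.2.2))),
      fun z p ↦ mul_pos (hv0 _ _) (hw0 _ _), fun z ↦ ?_⟩
    refine ((hσ.isHolderPair z).mono (ae_of_all _ fun y ↦ ?_)).trans (hv1 z)
    simp_rw [ENNReal.coe_mul]
    exact ((hρ.isHolderPair (z, y)).const_mul_le _ hw.of_uncurry_left.coe_nnreal_ennreal).trans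
      (mul_le_of_le_one_right' (hw1 (z, y)))

end IsKotheDualField

end IteratedNorm

/-! ### Operations on measurable fields -/

namespace IsHolderPair

variable {μ : Measure X} {ρ ρ' : (X → ℝ≥0∞) → ℝ≥0∞}

lemma scale (h : IsHolderPair μ ρ ρ') {c : ℝ≥0} (hc : c ≠ 0) :
    IsHolderPair μ (fun f ↦ c * ρ f) (fun f ↦ (c : ℝ≥0∞)⁻¹ * ρ' f) where
  mono f g hfg := by
    gcongr
    exact h.mono hfg
  const_mul_le b f hf := by
    rw [mul_left_comm]
    gcongr
    exact h.const_mul_le b hf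
  ae_lt_top f hf hfin :=
    h.ae_lt_top hf (ENNReal.lt_top_of_mul_ne_top_right hfin (ENNReal.coe_ne_zero.2 hc)).ne
  tendsto_zero_of_antitone f hf hanti hfin hlim := by
    simpa using ENNReal.Tendsto.const_mul (h.tendsto_zero_of_antitone hf hanti
      (ENNReal.lt_top_of_mul_ne_top_right hfin (ENNReal.coe_ne_zero.2 hc)).ne hlim)
      (.inr (coe_ne_top (r := c)))
  lintegral_mul_le f g hf hg := by
    rw [mul_mul_mul_comm, ENNReal.mul_inv_cancel (ENNReal.coe_ne_zero.2 hc) coe_ne_top, one_mul]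
    exact h.lintegral_mul_le hf hg

lemma map {X' : Type*} [MeasurableSpace X'] {μ' : Measure X'} (h : IsHolderPair μ ρ ρ')
    {π : X → X'} (hπ : MeasurePreserving π μ μ') :
    IsHolderPair μ' (fun f ↦ ρ fun x ↦ f (π x)) (fun f ↦ ρ' fun x ↦ f (π x)) where
  mono f g hfg := h.mono (hπ.quasiMeasurePreserving.ae hfg)
  const_mul_le c f hf := h.const_mul_le c (hf.comp hπ.measurable)
  ae_lt_top f hf hfin := by
    rw [← hπ.map_eq, ae_map_iff hπ.aemeasurable (measurableSet_lt hf measurable_const)]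
    exact h.ae_lt_top (hf.comp hπ.measurable) hfin
  tendsto_zero_of_antitone f hf hanti hfin hlim :=
    h.tendsto_zero_of_antitone (fun n ↦ (hf n).comp hπ.measurable)
      (fun m n hmn x ↦ hanti hmn (π x)) hfin (hπ.quasiMeasurePreserving.ae hlim)
  lintegral_mul_le f g hf hg := by
    rw [← hπ.lintegral_comp (hf.fun_mul hg)]
    exact h.lintegral_mul_le (hf.comp hπ.measurable) (hg.comp hπ.measurable)

end IsHolderPair

namespace IsKotheDualField

variable {κ : Kernel Y X} {ρ ρ' : Y → (X → ℝ≥0∞) → ℝ≥0∞}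

lemma scale (h : IsKotheDualField κ ρ ρ') {c : Y → ℝ≥0} (hc : Measurable c) (hc0 : ∀ y, c y ≠ 0) :
    IsKotheDualField κ (fun y f ↦ c y * ρ y f) (fun y f ↦ (c y : ℝ≥0∞)⁻¹ * ρ' y f) := by
  have hc' : Measurable fun y ↦ (c y : ℝ≥0∞) := hc.coe_nnreal_ennreal
  have hc0' y : (c y : ℝ≥0∞) ≠ 0 := ENNReal.coe_ne_zero.2 (hc0 y)
  have hcancel y (a : ℝ≥0∞) : c y * ((c y : ℝ≥0∞)⁻¹ * a) = a :=
    ENNReal.mul_inv_cancel_left (hc0' y) coe_ne_top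
  have hunit y {f : X → ℝ≥0∞} (hf : Measurable f) (hf1 : ρ y f ≤ 1) :
      c y * ρ y (fun x ↦ (c y : ℝ≥0∞)⁻¹ * f x) ≤ 1 :=
    calc _ ≤ c y * ((c y : ℝ≥0∞)⁻¹ * ρ y f) := by
          gcongr
          exact (h.isHolderPair y).const_mul_le _ hf
      _ ≤ 1 := (hcancel y _).trans_le hf1
  refine ⟨fun y ↦ (h.isHolderPair y).scale (hc0 y), fun F hF ↦ hc'.mul (h.measurable hF),
    fun F hF ↦ hc'.inv.mul (h.measurable_dual hF), fun G H hG hH hlt ↦ ?_, ?_⟩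
  · have hlt' y (hy : c y * H y ≠ 0) : c y * H y < ρ' y (G y) := by
      rw [← hcancel y (ρ' y (G y))]
      exact ENNReal.mul_lt_mul_right (hc0' y) coe_ne_top (hlt y (right_ne_zero_of_mul hy))
    obtain ⟨F, hF, hF1, hHF⟩ := h.exists_le_lintegral_mul hG (hc'.fun_mul hH) hlt'
    refine ⟨fun y x ↦ (c y : ℝ≥0∞)⁻¹ * F y x, (hc'.inv.comp measurable_fst).mul hF,
      fun y ↦ hunit y hF.of_uncurry_left (hF1 y), fun y ↦ ?_⟩
    calc H y = (c y : ℝ≥0∞)⁻¹ * (c y * H y) :=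
          (ENNReal.inv_mul_cancel_left (hc0' y) coe_ne_top).symm
      _ ≤ (c y : ℝ≥0∞)⁻¹ * ∫⁻ x, F y x * G y x ∂κ y := by
          gcongr
          exact hHF y
      _ = ∫⁻ x, (c y : ℝ≥0∞)⁻¹ * F y x * G y x ∂κ y := by
          simp_rw [mul_assoc]
          exact (lintegral_const_mul _ (hF.of_uncurry_left.fun_mul hG.of_uncurry_left)).symm
  · obtain ⟨w, hw, hw0, hw1⟩ := h.exists_weight
    refine ⟨fun y x ↦ (c y)⁻¹ * w y x, (hc.inv.comp measurable_fst).mul hw,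
      fun y x ↦ mul_pos (pos_iff_ne_zero.2 (inv_ne_zero (hc0 y))) (hw0 y x), fun y ↦ ?_⟩
    simp_rw [ENNReal.coe_mul, ENNReal.coe_inv (hc0 y)]
    exact hunit y hw.of_uncurry_left.coe_nnreal_ennreal (hw1 y)

lemma map {X' : Type*} [MeasurableSpace X'] {κ' : Kernel Y X'} (h : IsKotheDualField κ ρ ρ')
    {π : X → X'} {e : X' → X} (hmπ : Measurable π) (hπ : ∀ y, MeasurePreserving π (κ y) (κ' y))
    (he : Measurable e) (heπ : ∀ y, ∀ᵐ x ∂κ y, e (π x) = x) :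
    IsKotheDualField κ' (fun y f ↦ ρ y fun x ↦ f (π x)) (fun y f ↦ ρ' y fun x ↦ f (π x)) := by
  have hcomp {F : Y → X' → ℝ≥0∞} (hF : Measurable (uncurry F)) :
      Measurable (uncurry fun y x ↦ F y (π x)) := hF.comp (measurable_id.prodMap hmπ)
  have hunit y {f : X → ℝ≥0∞} (hf : ρ y f ≤ 1) : ρ y (fun x ↦ f (e (π x))) ≤ 1 :=
    ((h.isHolderPair y).mono ((heπ y).mono fun x hx ↦ by simp [hx])).trans hf
  refine ⟨fun y ↦ (h.isHolderPair y).map (hπ y), fun F hF ↦ h.measurable (hcomp hF),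
    fun F hF ↦ h.measurable_dual (hcomp hF), fun G H hG hH hlt ↦ ?_, ?_⟩
  · obtain ⟨F, hF, hF1, hHF⟩ := h.exists_le_lintegral_mul (hcomp hG) hH hlt
    have hFe : Measurable (uncurry fun y x' ↦ F y (e x')) := hF.comp (measurable_id.prodMap he)
    refine ⟨fun y x' ↦ F y (e x'), hFe, fun y ↦ hunit y (hF1 y), fun y ↦ (hHF y).trans_eq ?_⟩
    rw [← (hπ y).lintegral_comp (hFe.of_uncurry_left.fun_mul hG.of_uncurry_left)]
    exact lintegral_congr_ae ((heπ y).mono fun x hx ↦ by simp [hx])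
  · obtain ⟨w, hw, hw0, hw1⟩ := h.exists_weight
    exact ⟨fun y x' ↦ w y (e x'), hw.comp (measurable_id.prodMap he), fun y x' ↦ hw0 y (e x'),
      fun y ↦ hunit y (hw1 y)⟩

end IsKotheDualField

lemma isKotheDualField_dirac [MeasurableSingletonClass X] (a : X) :
    IsKotheDualField (Kernel.const Y (Measure.dirac a)) (fun _ f ↦ f a) (fun _ f ↦ f a) where
  isHolderPair y :=
    { mono f g hfg := by simpa [EventuallyLE, ae_dirac_eq] using hfg
      const_mul_le c f _ := le_rfl
      ae_lt_top f _ hfin := by simpa [ae_dirac_eq] using hfin.lt_top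
      tendsto_zero_of_antitone f _ _ _ hlim := by simpa [ae_dirac_eq] using hlim
      lintegral_mul_le f g _ _ := by simp }
  measurable _ hF := hF.of_uncurry_right
  measurable_dual _ hF := hF.of_uncurry_right
  exists_le_lintegral_mul G H _ _ hlt := by
    refine ⟨fun _ _ ↦ 1, measurable_const, fun _ ↦ le_rfl, fun y ↦ ?_⟩
    by_cases hy : H y = 0
    · simp [hy]
    · simpa using (hlt y hy).le
  exists_weight := ⟨fun _ _ ↦ 1, measurable_const, fun _ _ ↦ one_pos, fun _ ↦ by simp⟩

/-! ### Lebesgue norms -/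

lemma eLpNorm_ennreal_eq_lintegral_rpow {μ : Measure X} {p : ℝ≥0∞} (hp0 : p ≠ 0) (hp : p ≠ ∞)
    (f : X → ℝ≥0∞) : eLpNorm f p μ = (∫⁻ x, f x ^ p.toReal ∂μ) ^ (1 / p.toReal) := by
  simp [eLpNorm_eq_lintegral_rpow_enorm_toReal hp0 hp]

lemma lintegral_mul_le_eLpNorm_mul_eLpNorm {μ : Measure X} (p q : ℝ≥0∞)
    [ENNReal.HolderConjugate p q] (hp : p ≠ ∞) {f g : X → ℝ≥0∞} (hf : Measurable f)
    (hg : Measurable g) : ∫⁻ x, f x * g x ∂μ ≤ eLpNorm f p μ * eLpNorm g q μ := by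
  by_cases hq : q = ∞
  · obtain rfl : p = 1 := (ENNReal.HolderConjugate.eq_top_iff_eq_one q p).1 hq
    subst hq
    rw [eLpNorm_one_eq_lintegral_enorm, eLpNorm_exponent_top, ← lintegral_mul_const _ (by simpa)]
    exact lintegral_mono_ae <|
      (enorm_ae_le_eLpNormEssSup g μ).mono fun x hx ↦ mul_le_mul_right hx (f x)
  · rw [eLpNorm_ennreal_eq_lintegral_rpow (ENNReal.HolderConjugate.ne_zero p q) hp,
      eLpNorm_ennreal_eq_lintegral_rpow (ENNReal.HolderConjugate.ne_zero q p) hq]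
    exact ENNReal.lintegral_mul_le_Lp_mul_Lq μ
      (ENNReal.HolderConjugate.toReal_of_ne_top hp hq) hf.aemeasurable hg.aemeasurable

lemma isHolderPair_eLpNorm (μ : Measure X) (p q : ℝ≥0∞) [ENNReal.HolderConjugate p q]
    (hp : p ≠ ∞) : IsHolderPair μ (eLpNorm · p μ) (eLpNorm · q μ) := by
  have hp0 : p ≠ 0 := ENNReal.HolderConjugate.ne_zero p q
  have hpos : 0 < p.toReal := ENNReal.toReal_pos hp0 hp
  have heq := eLpNorm_ennreal_eq_lintegral_rpow (μ := μ) hp0 hp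
  have hlt {f : X → ℝ≥0∞} (hf : eLpNorm f p μ ≠ ∞) : ∫⁻ x, f x ^ p.toReal ∂μ ≠ ∞ := by
    rwa [heq, Ne, ENNReal.rpow_eq_top_iff_of_pos (by positivity)] at hf
  refine ⟨fun f g hfg ↦ eLpNorm_mono_enorm_ae hfg, fun c f hf ↦ ?_, fun f hf hfin ↦ ?_,
    fun f hf hanti hfin hlim ↦ ?_,
    fun f g hf hg ↦ lintegral_mul_le_eLpNorm_mul_eLpNorm p q hp hf hg⟩
  · simp_rw [heq, ENNReal.mul_rpow_of_nonneg _ _ hpos.le]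
    rw [lintegral_const_mul _ (hf.pow_const _), ENNReal.mul_rpow_of_nonneg _ _ (by positivity),
      one_div, ENNReal.rpow_rpow_inv hpos.ne']
  · filter_upwards [ae_lt_top (hf.pow_const _) (hlt hfin)] with x hx
    exact (ENNReal.rpow_lt_top_iff_of_pos hpos).1 hx
  · have hint : Tendsto (fun n ↦ ∫⁻ x, f n x ^ p.toReal ∂μ) atTop (𝓝 0) := by
      rw [← lintegral_zero (μ := μ)]
      refine tendsto_lintegral_of_dominated_convergence _ (fun n ↦ (hf n).pow_const _)
        (fun n ↦ ae_of_all _ fun x ↦ ENNReal.rpow_le_rpow (hanti n.zero_le x) hpos.le) (hlt hfin)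
        (hlim.mono fun x hx ↦ ?_)
      simpa [hpos] using hx.ennrpow_const p.toReal
    simp_rw [heq]
    simpa [hpos] using hint.ennrpow_const (1 / p.toReal)

section Kernel

variable {κ : Kernel Y X} [IsSFiniteKernel κ]

lemma measurable_essSup_kernel {F : Y → X → ℝ≥0∞} (hF : Measurable (uncurry F)) :
    Measurable fun y ↦ essSup (F y) (κ y) := by
  refine measurable_of_Ioi fun c ↦ ?_
  have hpre : (fun y ↦ essSup (F y) (κ y)) ⁻¹' Set.Ioi c
      = (fun y ↦ κ y {x | c < F y x}) ⁻¹' {0}ᶜ := by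
    ext y
    have hae : essSup (F y) (κ y) ≤ c ↔ ∀ᵐ x ∂κ y, F y x ≤ c :=
      ⟨fun h ↦ (ENNReal.ae_le_essSup _).mono fun x hx ↦ hx.trans h, essSup_le_of_ae_le c⟩
    simpa [ae_iff] using hae.not
  rw [hpre]
  exact Kernel.measurable_kernel_prodMk_left (measurableSet_lt measurable_const hF)
    (measurableSet_singleton 0).compl

lemma measurable_eLpNorm_kernel {p : ℝ≥0∞} {F : Y → X → ℝ≥0∞} (hF : Measurable (uncurry F)) :
    Measurable fun y ↦ eLpNorm (F y) p (κ y) := by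
  rcases eq_or_ne p 0 with rfl | hp0
  · simp
  rcases eq_or_ne p ∞ with rfl | hp
  · exact measurable_essSup_kernel hF
  · simp_rw [eLpNorm_ennreal_eq_lintegral_rpow hp0 hp]
    exact (Measurable.lintegral_kernel_prod_right (hF.pow_const _)).pow_const _

lemma iSup_min_natCast_mul (a : ℝ≥0∞) {c : ℝ≥0∞} (hc : c ≠ 0) : ⨆ n : ℕ, min a (n * c) = a := by
  rw [← inf_iSup_eq, ← ENNReal.iSup_mul, ENNReal.iSup_natCast, ENNReal.top_mul hc, inf_top_eq]

lemma exists_truncation_lt_lintegral_rpow {w : X → ℝ≥0} (hw : Measurable w) (hw0 : ∀ x, 0 < w x)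
    (hw1 : ∀ y, ∫⁻ x, w x ∂κ y ≠ ∞) {q : ℝ} (hq : 0 < q) {G : Y → X → ℝ≥0∞} {H : Y → ℝ≥0∞}
    (hG : Measurable (uncurry G)) (hH : Measurable H)
    (hlt : ∀ y, H y ≠ 0 → H y < (∫⁻ x, G y x ^ q ∂κ y) ^ (1 / q)) :
    ∃ t : Y → X → ℝ≥0∞, Measurable (uncurry t) ∧ t ≤ G ∧ (∀ y, ∫⁻ x, t y x ^ q ∂κ y ≠ ∞) ∧
      ∀ y, H y ≠ 0 → H y < (∫⁻ x, t y x ^ q ∂κ y) ^ (1 / q) := by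
  let t (n : ℕ) (y : Y) (x : X) : ℝ≥0∞ := min (G y x) (n * (w x : ℝ≥0∞) ^ (1 / q))
  have hw' : Measurable fun x ↦ (w x : ℝ≥0∞) ^ (1 / q) := hw.coe_nnreal_ennreal.pow_const _
  have ht n : Measurable (uncurry (t n)) := hG.min ((hw'.comp measurable_snd).const_mul _)
  have htop n y : ∫⁻ x, t n y x ^ q ∂κ y ≠ ∞ := by
    have hle x : t n y x ^ q ≤ (n : ℝ≥0∞) ^ q * w x := by
      refine (ENNReal.rpow_le_rpow (min_le_right _ _) hq.le).trans_eq ?_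
      rw [ENNReal.mul_rpow_of_nonneg _ _ hq.le, one_div, ENNReal.rpow_inv_rpow hq.ne']
    refine ne_top_of_le_ne_top ?_ (lintegral_mono hle)
    rw [lintegral_const_mul _ hw.coe_nnreal_ennreal]
    exact ENNReal.mul_ne_top (ENNReal.rpow_ne_top_of_nonneg hq.le (natCast_ne_top n)) (hw1 y)
  have hpow {s : ℝ} (hs : 0 < s) (a : ℕ → ℝ≥0∞) : (⨆ n, a n) ^ s = ⨆ n, a n ^ s :=
    (ENNReal.orderIsoRpow s hs).map_iSup a
  have hiSup y : ⨆ n, (∫⁻ x, t n y x ^ q ∂κ y) ^ (1 / q) = (∫⁻ x, G y x ^ q ∂κ y) ^ (1 / q) := by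
    rw [← hpow (by positivity), ← lintegral_iSup]
    · simp_rw [← hpow hq, t]
      congr! with x
      exact iSup_min_natCast_mul _ (by simp [(hw0 x).ne'])
    · exact fun n ↦ (ht n).of_uncurry_left.pow_const _
    · intro m n hmn x
      dsimp only [t]
      gcongr
  obtain ⟨N, hN, hNlt⟩ := exists_measurable_nat_lt_of_lt_iSup hH
    (fun n ↦ (Measurable.lintegral_kernel_prod_right ((ht n).pow_const q)).pow_const (1 / q))
    fun y hy ↦ (hlt y hy).trans_eq (hiSup y).symm
  exact ⟨fun y ↦ t (N y) y, measurable_uncurry_natIndex hN ht, fun y x ↦ min_le_left _ _,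
    fun y ↦ htop (N y) y, hNlt⟩

lemma exists_le_lintegral_mul_of_lt_lintegral_rpow {w : X → ℝ≥0} (hw : Measurable w)
    (hw0 : ∀ x, 0 < w x) (hw1 : ∀ y, ∫⁻ x, w x ∂κ y ≠ ∞) {p q : ℝ} (hpq : p.HolderConjugate q)
    {G : Y → X → ℝ≥0∞} {H : Y → ℝ≥0∞} (hG : Measurable (uncurry G)) (hH : Measurable H)
    (hlt : ∀ y, H y ≠ 0 → H y < (∫⁻ x, G y x ^ q ∂κ y) ^ (1 / q)) :
    ∃ F : Y → X → ℝ≥0∞, Measurable (uncurry F) ∧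
      (∀ y, (∫⁻ x, F y x ^ p ∂κ y) ^ (1 / p) ≤ 1) ∧ ∀ y, H y ≤ ∫⁻ x, F y x * G y x ∂κ y := by
  obtain ⟨t, ht, htG, htop, hHt⟩ :=
    exists_truncation_lt_lintegral_rpow hw hw0 hw1 hpq.symm.pos hG hH hlt
  let I y : ℝ≥0∞ := ∫⁻ x, t y x ^ q ∂κ y
  have hI : Measurable I := Measurable.lintegral_kernel_prod_right (ht.pow_const q)
  have hty y (s : ℝ) : Measurable fun x ↦ t y x ^ s := ht.of_uncurry_left.pow_const s
  -- The extremal function of Hölder's inequality, normalised in `L^p`.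
  refine ⟨fun y x ↦ I y ^ (-(1 / p)) * t y x ^ (q - 1),
    ((hI.pow_const _).comp measurable_fst).mul (ht.pow_const _), fun y ↦ ?_, fun y ↦ ?_⟩
  · have hexp x : (I y ^ (-(1 / p)) * t y x ^ (q - 1)) ^ p = (I y)⁻¹ * t y x ^ q := by
      rw [ENNReal.mul_rpow_of_nonneg _ _ hpq.nonneg, ← ENNReal.rpow_mul, ← ENNReal.rpow_mul,
        hpq.symm.sub_one_mul_conj, neg_mul, one_div_mul_cancel hpq.ne_zero, ENNReal.rpow_neg_one]
    simp_rw [hexp]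
    rw [lintegral_const_mul _ (hty y q)]
    exact ENNReal.rpow_le_one (ENNReal.inv_mul_le_one _) (one_div_nonneg.2 hpq.nonneg)
  · rcases eq_or_ne (H y) 0 with hy | hy
    · simp [hy]
    have hI0 : I y ≠ 0 := fun h0 ↦ by simpa [I, h0, hpq.symm.pos] using hHt y hy
    have hmul x : t y x ^ (q - 1) * t y x = t y x ^ q := by
      nth_rw 2 [← ENNReal.rpow_one (t y x)]
      rw [← ENNReal.rpow_add_of_nonneg _ _ hpq.symm.sub_one_pos.le zero_le_one, sub_add_cancel]
    calc H y ≤ I y ^ (1 / q) := (hHt y hy).le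
      _ = I y ^ (-(1 / p)) * I y := by
        nth_rw 3 [← ENNReal.rpow_one (I y)]
        rw [← ENNReal.rpow_add _ _ hI0 (htop y), one_div, one_div, ← hpq.one_sub_inv,
          sub_eq_neg_add]
      _ = ∫⁻ x, I y ^ (-(1 / p)) * (t y x ^ (q - 1) * t y x) ∂κ y := by
        simp_rw [hmul]
        exact (lintegral_const_mul _ (hty y q)).symm
      _ ≤ ∫⁻ x, I y ^ (-(1 / p)) * t y x ^ (q - 1) * G y x ∂κ y := by
        simp_rw [mul_assoc]
        gcongr with x
        exact htG y x

lemma exists_le_lintegral_mul_of_lt_essSup {w : X → ℝ≥0} (hw : Measurable w)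
    (hw0 : ∀ x, 0 < w x) (hw1 : ∀ y, ∫⁻ x, w x ∂κ y ≠ ∞) {G : Y → X → ℝ≥0∞} {H : Y → ℝ≥0∞}
    (hG : Measurable (uncurry G)) (hH : Measurable H)
    (hlt : ∀ y, H y ≠ 0 → H y < essSup (G y) (κ y)) :
    ∃ F : Y → X → ℝ≥0∞, Measurable (uncurry F) ∧ (∀ y, ∫⁻ x, F y x ∂κ y ≤ 1) ∧
      ∀ y, H y ≤ ∫⁻ x, F y x * G y x ∂κ y := by
  let s y : Set X := {x | H y < G y x}
  have hs : MeasurableSet {q : Y × X | q.2 ∈ s q.1} :=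
    measurableSet_lt (hH.comp measurable_fst) hG
  let u (y : Y) : X → ℝ≥0∞ := (s y).indicator fun x ↦ w x
  have hu : Measurable (uncurry u) :=
    (hw.coe_nnreal_ennreal.comp measurable_snd).indicator hs
  let m y : ℝ≥0∞ := ∫⁻ x, u y x ∂κ y
  have hm : Measurable m := Measurable.lintegral_kernel_prod_right hu
  refine ⟨fun y x ↦ (m y)⁻¹ * u y x, (hm.inv.comp measurable_fst).mul hu, fun y ↦ ?_,
    fun y ↦ ?_⟩
  · rw [lintegral_const_mul _ hu.of_uncurry_left]
    exact ENNReal.inv_mul_le_one _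
  · rcases eq_or_ne (H y) 0 with hy | hy
    · simp [hy]
    have hm0 : m y ≠ 0 := by
      intro h0
      have hae : ∀ᵐ x ∂κ y, G y x ≤ H y := by
        filter_upwards [(lintegral_eq_zero_iff hu.of_uncurry_left).1 h0] with x hx
        by_contra! hxs
        have : (w x : ℝ≥0∞) = 0 := by simpa [u, s, hxs] using hx
        exact (hw0 x).ne' (by simpa using this)
      exact (hlt y hy).not_ge (essSup_le_of_ae_le _ hae)
    have hmtop : m y ≠ ∞ := ne_top_of_le_ne_top (hw1 y)
      (lintegral_mono fun x ↦ Set.indicator_le_self _ _ x)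
    calc H y = (m y)⁻¹ * (m y * H y) := (ENNReal.inv_mul_cancel_left hm0 hmtop).symm
      _ = ∫⁻ x, (m y)⁻¹ * (u y x * H y) ∂κ y := by
        rw [lintegral_const_mul _ (hu.of_uncurry_left.mul_const _),
          lintegral_mul_const _ hu.of_uncurry_left]
      _ ≤ ∫⁻ x, (m y)⁻¹ * u y x * G y x ∂κ y := by
        simp_rw [mul_assoc]
        refine lintegral_mono fun x ↦ mul_le_mul_right ?_ _
        by_cases hx : x ∈ s y
        · exact mul_le_mul_right (le_of_lt hx) _
        · simp [u, hx]

lemma isKotheDualField_eLpNorm {μ : Measure X} [SigmaFinite μ] (hκ : ∀ y, κ y ≤ μ)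
    (p q : ℝ≥0∞) [ENNReal.HolderConjugate p q] (hp : p ≠ ∞) :
    IsKotheDualField κ (fun y f ↦ eLpNorm f p (κ y)) (fun y f ↦ eLpNorm f q (κ y)) := by
  have hp0 : p ≠ 0 := ENNReal.HolderConjugate.ne_zero p q
  have hpos : 0 < p.toReal := ENNReal.toReal_pos hp0 hp
  obtain ⟨w, hw0, hw, hw1⟩ := exists_pos_lintegral_lt_of_sigmaFinite μ one_ne_zero
  have hκw y : ∫⁻ x, w x ∂κ y ≤ 1 := (lintegral_mono' (hκ y) le_rfl).trans hw1.le
  have hκw' y : ∫⁻ x, w x ∂κ y ≠ ∞ := ne_top_of_le_ne_top one_ne_top (hκw y)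
  refine ⟨fun y ↦ isHolderPair_eLpNorm _ p q hp, fun F ↦ measurable_eLpNorm_kernel,
    fun F ↦ measurable_eLpNorm_kernel, fun G H hG hH hlt ↦ ?_, ?_⟩
  · rcases eq_or_ne q ∞ with rfl | hq
    · obtain rfl : p = 1 := (ENNReal.HolderConjugate.eq_top_iff_eq_one ∞ p).1 rfl
      simpa [eLpNorm_one_eq_lintegral_enorm] using
        exists_le_lintegral_mul_of_lt_essSup hw hw0 hκw' hG hH hlt
    · have hq0 : q ≠ 0 := ENNReal.HolderConjugate.ne_zero q p
      simp_rw [eLpNorm_ennreal_eq_lintegral_rpow hp0 hp]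
      simp_rw [eLpNorm_ennreal_eq_lintegral_rpow hq0 hq] at hlt
      exact exists_le_lintegral_mul_of_lt_lintegral_rpow hw hw0 hκw'
        (ENNReal.HolderConjugate.toReal_of_ne_top hp hq) hG hH hlt
  · refine ⟨fun _ x ↦ w x ^ (1 / p.toReal), (hw.pow_const _).comp measurable_snd,
      fun _ x ↦ NNReal.rpow_pos (hw0 x), fun y ↦ ?_⟩
    have hpow x : ((w x ^ (1 / p.toReal) : ℝ≥0) : ℝ≥0∞) ^ p.toReal = w x := by
      rw [ENNReal.coe_rpow_of_nonneg _ (by positivity), one_div, ENNReal.rpow_inv_rpow hpos.ne']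
    simp_rw [eLpNorm_ennreal_eq_lintegral_rpow hp0 hp, hpow]
    exact ENNReal.rpow_le_one (hκw y) (by positivity)

end Kernel

/-! ### Partitioned norms -/

section Partition

variable {ι : Type*} [MeasurableSpace ι] [Countable ι] [MeasurableSingletonClass ι]

/-- The kernel sending `k` to the restriction of `μ` to the fiber of `π : X → ι` over `k`. Being
written as a kernel with density, it is s-finite. -/
def fiberKernel (μ : Measure X) [SFinite μ] (π : X → ι) : Kernel ι X :=
  (Kernel.const ι μ).withDensity fun k ↦ (π ⁻¹' {k}).indicator 1

variable {μ : Measure X} [SFinite μ] {π : X → ι}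

instance : IsSFiniteKernel (fiberKernel μ π) :=
  Kernel.IsSFiniteKernel.withDensity _ fun k x ↦ by
    by_cases hx : π x = k <;> simp [hx]

lemma fiberKernel_apply (hπ : Measurable π) (k : ι) :
    fiberKernel μ π k = μ.restrict (π ⁻¹' {k}) := by
  have hfiber k : MeasurableSet (π ⁻¹' {k}) := hπ (measurableSet_singleton k)
  rw [fiberKernel, Kernel.withDensity_apply, Kernel.const_apply,
    withDensity_indicator_one (hfiber k)]
  exact measurable_from_prod_countable_right fun k ↦ measurable_one.indicator (hfiber k)

lemma measurePreserving_snd_count_compProd_fiberKernel (hπ : Measurable π) :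
    MeasurePreserving Prod.snd (Measure.count ⊗ₘ fiberKernel μ π) μ := by
  refine ⟨measurable_snd, Measure.ext fun s hs ↦ ?_⟩
  have hfiber k : fiberKernel μ π k s = μ.restrict s (π ⁻¹' {k}) := by
    rw [fiberKernel_apply hπ, Measure.restrict_apply hs,
      Measure.restrict_apply (hπ (measurableSet_singleton k)), Set.inter_comm]
  rw [Measure.map_apply measurable_snd hs, Measure.compProd_apply (measurable_snd hs),
    lintegral_count]
  change ∑' k, fiberKernel μ π k s = μ s
  simp_rw [hfiber]
  rw [← tsum_univ, tsum_measure_preimage_singleton Set.countable_univ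
    fun k _ ↦ hπ (measurableSet_singleton k), Set.preimage_univ, Measure.restrict_apply_univ]

lemma ae_compProd_fiberKernel (hπ : Measurable π) (ν : Measure ι) [SFinite ν] :
    ∀ᵐ q ∂(ν ⊗ₘ fiberKernel μ π), π q.2 = q.1 := by
  have hs : MeasurableSet {q : ι × X | π q.2 = q.1} :=
    measurableSet_eq_fun (hπ.comp measurable_snd) measurable_fst
  refine (Measure.ae_compProd_iff hs).2 <| ae_of_all _ fun k ↦ ?_
  rw [fiberKernel_apply hπ]
  exact ae_restrict_mem (hπ (measurableSet_singleton k))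

lemma IsKotheDualField.partition (hπ : Measurable π) {σ σ' : Y → (ι → ℝ≥0∞) → ℝ≥0∞}
    {ρ ρ' : Y × ι → (X → ℝ≥0∞) → ℝ≥0∞} (hσ : IsKotheDualField (Kernel.const Y .count) σ σ')
    (hρ : IsKotheDualField ((fiberKernel μ π).prodMkLeft Y) ρ ρ') :
    IsKotheDualField (Kernel.const Y μ) (fun y f ↦ σ y fun k ↦ ρ (y, k) f)
      (fun y f ↦ σ' y fun k ↦ ρ' (y, k) f) := by
  have hcomp (y : Y) : (Kernel.const Y .count ⊗ₖ (fiberKernel μ π).prodMkLeft Y) y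
      = Measure.count ⊗ₘ fiberKernel μ π := Kernel.compProd_apply_eq_compProd_sectR _ _ y
  refine (hσ.compProd hρ).map measurable_snd (fun y ↦ ?_)
    (hπ.prodMk measurable_id) fun y ↦ ?_
  · rw [hcomp]
    exact measurePreserving_snd_count_compProd_fiberKernel hπ
  · rw [hcomp]
    exact (ae_compProd_fiberKernel hπ _).mono fun q hq ↦ Prod.ext hq rfl

end Partition

/-! ### Herz norms -/

lemma lqNormOn_eq_eLpNorm {q : ℝ≥0∞} (hq : q ≠ 0) {s : Set ℝ} (hs : MeasurableSet s)
    (g : ℝ → ℝ≥0∞) : lqNormOn q s g = eLpNorm g q (volume.restrict s) := by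
  unfold lqNormOn
  split_ifs with h
  · rw [h, eLpNorm_exponent_top, ENNReal.essSup_indicator_eq_essSup_restrict hs]
    rfl
  · rw [eLpNorm_ennreal_eq_lintegral_rpow hq h]

lemma lpZNorm_eq_eLpNorm {p : ℝ≥0∞} (hp : p ≠ 0) (a : ℤ → ℝ≥0∞) :
    lpZNorm p a = eLpNorm a p Measure.count := by
  unfold lpZNorm
  split_ifs with h
  · simp [h]
  · rw [eLpNorm_ennreal_eq_lintegral_rpow hp h, lintegral_count]

/-- The index of the dyadic annulus containing `x`, for `x ≠ 0`. -/
def herzIndex (x : ℝ) : ℤ := Int.log 2 |x| + 1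

lemma measurable_herzIndex : Measurable herzIndex := by
  have hlog : Measurable (Int.log 2 : ℝ → ℤ) := by
    unfold Int.log
    exact .ite measurableSet_Ici
      ((measurable_from_top (f := fun m ↦ (Nat.log 2 m : ℤ))).comp Nat.measurable_floor)
      ((measurable_from_top (f := fun m ↦ -(Nat.clog 2 m : ℤ))).comp
        (Nat.measurable_ceil.comp measurable_inv))
  exact (hlog.comp measurable_abs).add_const 1

lemma mem_herzRing_iff_herzIndex_eq {x : ℝ} (hx : x ≠ 0) {k : ℤ} :
    x ∈ herzRing k ↔ herzIndex x = k := by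
  have habs : 0 < |x| := abs_pos.2 hx
  have hlt := Int.lt_zpow_iff_log_lt one_lt_two (x := k) habs
  have hle := Int.zpow_le_iff_le_log one_lt_two (x := k - 1) habs
  push_cast at hlt hle
  rw [herzRing, Set.mem_sdiff, Set.mem_Ioo, Set.mem_Ioo, ← abs_lt, ← abs_lt, not_lt, hlt, hle,
    herzIndex]
  lia

lemma fiberKernel_herzIndex_apply (k : ℤ) :
    fiberKernel volume herzIndex k = volume.restrict (herzRing k) := by
  rw [fiberKernel_apply measurable_herzIndex]
  refine Measure.restrict_congr_set ?_
  filter_upwards [Measure.ae_ne volume 0] with x hx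
  exact propext (mem_herzRing_iff_herzIndex_eq hx).symm

lemma herzNorm1_eq_eLpNorm (α : ℝ) {p q : ℝ≥0∞} (hp : p ≠ 0) (hq : q ≠ 0) (g : ℝ → ℝ≥0∞) :
    herzNorm1 α p q g = eLpNorm (fun k : ℤ ↦ ENNReal.ofReal (2 ^ (k * α)) *
      eLpNorm g q (fiberKernel volume herzIndex k)) p Measure.count := by
  have hring k : MeasurableSet (herzRing k) := measurableSet_Ioo.diff measurableSet_Ioo
  rw [herzNorm1, lpZNorm_eq_eLpNorm hp]
  simp_rw [lqNormOn_eq_eLpNorm hq (hring _), fiberKernel_herzIndex_apply]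

lemma isKotheDualField_herzNorm1 (α : ℝ) (p q p' q' : ℝ≥0∞) [ENNReal.HolderConjugate p p']
    [ENNReal.HolderConjugate q q'] (hp : p ≠ ∞) (hq : q ≠ ∞) :
    IsKotheDualField (Kernel.const Y volume) (fun _ ↦ herzNorm1 α p q)
      (fun _ ↦ herzNorm1 (-α) p' q') := by
  let c (y : Y × ℤ) : ℝ≥0 := (2 ^ (y.2 * α) : ℝ).toNNReal
  have hc : Measurable c :=
    (measurable_from_top (f := fun k : ℤ ↦ (2 ^ (k * α) : ℝ).toNNReal)).comp measurable_snd
  have hpos (k : ℤ) : 0 < (2 : ℝ) ^ (k * α) := by positivity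
  have hinv (k : ℤ) : ENNReal.ofReal (2 ^ (k * -α)) = (ENNReal.ofReal (2 ^ (k * α)))⁻¹ := by
    rw [← ENNReal.ofReal_inv_of_pos (hpos k), mul_neg, Real.rpow_neg zero_le_two]
  have hle (y : Y × ℤ) : (fiberKernel volume herzIndex).prodMkLeft Y y ≤ volume := by
    rw [Kernel.prodMkLeft_apply, fiberKernel_apply measurable_herzIndex]
    exact Measure.restrict_le_self
  have h := IsKotheDualField.partition measurable_herzIndex
    (isKotheDualField_eLpNorm (μ := Measure.count) (fun _ : Y ↦ le_rfl) p p' hp)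
    ((isKotheDualField_eLpNorm hle q q' hq).scale hc fun y ↦ (Real.toNNReal_pos.2 (hpos y.2)).ne')
  change IsKotheDualField _ (fun _ f ↦ herzNorm1 α p q f) fun _ f ↦ herzNorm1 (-α) p' q' f
  simp_rw [herzNorm1_eq_eLpNorm _ (ENNReal.HolderConjugate.ne_zero p p')
    (ENNReal.HolderConjugate.ne_zero q q'), herzNorm1_eq_eLpNorm _
    (ENNReal.HolderConjugate.ne_zero p' p) (ENNReal.HolderConjugate.ne_zero q' q), hinv]
  exact h

lemma isKotheDualField_mixedHerzNormE (n : ℕ) (α : Fin n → ℝ) (p q p' q' : Fin n → ℝ≥0∞)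
    [∀ i, ENNReal.HolderConjugate (p i) (p' i)] [∀ i, ENNReal.HolderConjugate (q i) (q' i)]
    (hp : ∀ i, p i ≠ ∞) (hq : ∀ i, q i ≠ ∞) :
    IsKotheDualField (Kernel.const Y volume) (fun _ ↦ mixedHerzNormE n α p q)
      (fun _ ↦ mixedHerzNormE n (-α) p' q') := by
  induction n generalizing Y with
  | zero =>
    rw [Measure.volume_pi_eq_dirac fun i ↦ i.elim0]
    exact isKotheDualField_dirac _
  | succ n ih =>
    have : ∀ i, ENNReal.HolderConjugate (Fin.init p i) (Fin.init p' i) :=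
      fun i ↦ inferInstanceAs (ENNReal.HolderConjugate (p i.castSucc) (p' i.castSucc))
    have : ∀ i, ENNReal.HolderConjugate (Fin.init q i) (Fin.init q' i) :=
      fun i ↦ inferInstanceAs (ENNReal.HolderConjugate (q i.castSucc) (q' i.castSucc))
    let e := MeasurableEquiv.piFinSuccAbove (fun _ : Fin (n + 1) ↦ ℝ) (Fin.last n)
    have he : MeasurePreserving e.symm (volume.prod volume) volume :=
      (volume_preserving_piFinSuccAbove (fun _ ↦ ℝ) (Fin.last n)).symm
    have hsnoc (x : ℝ) (y : Fin n → ℝ) : e.symm (x, y) = Fin.snoc y x := Fin.insertNth_last' x y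
    have hvol (y : Y) : (Kernel.const Y (volume : Measure ℝ) ⊗ₖ
        Kernel.const (Y × ℝ) (volume : Measure (Fin n → ℝ))) y = volume.prod volume := by
      rw [Kernel.compProd_apply_eq_compProd_sectR, ← Measure.compProd_const]
      rfl
    have hlast := isKotheDualField_herzNorm1 (Y := Y) (α (Fin.last n)) (p (Fin.last n))
      (q (Fin.last n)) (p' (Fin.last n)) (q' (Fin.last n)) (hp _) (hq _)
    have hinit := ih (Y := Y × ℝ) (Fin.init α) (Fin.init p) (Fin.init q) (Fin.init p') (Fin.init q')
      (fun i ↦ hp i.castSucc) fun i ↦ hq i.castSucc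
    have h := (hlast.compProd hinit).map (κ' := Kernel.const Y volume)
      e.symm.measurable (fun y ↦ by rwa [hvol]) e.measurable
      fun y ↦ ae_of_all _ e.apply_symm_apply
    simp only [iteratedNorm, hsnoc] at h
    exact h

/-! ### Bounded functionals -/

/-- The measurable complex-valued functions of finite `ρ`-norm. -/
structure MemFunctionSpace (ρ : (X → ℝ≥0∞) → ℝ≥0∞) (f : X → ℂ) : Prop where
  measurable : Measurable f
  ne_top : ρ (‖f ·‖ₑ) ≠ ∞

/-- `T` is a linear functional of norm at most `C` on the function space of `ρ`. The space is not
bundled: the values of `T` on other functions are irrelevant. -/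
structure IsBoundedFunctional (ρ : (X → ℝ≥0∞) → ℝ≥0∞) (T : (X → ℂ) → ℂ) (C : ℝ≥0) : Prop where
  map_add : ∀ ⦃f g : X → ℂ⦄, MemFunctionSpace ρ f → MemFunctionSpace ρ g → T (f + g) = T f + T g
  map_smul : ∀ (c : ℂ) ⦃f : X → ℂ⦄, MemFunctionSpace ρ f → T (c • f) = c * T f
  enorm_map_le : ∀ ⦃f : X → ℂ⦄, MemFunctionSpace ρ f → ‖T f‖ₑ ≤ C * ρ (‖f ·‖ₑ)

namespace IsHolderPair

variable {μ : Measure X} {ρ ρ' : (X → ℝ≥0∞) → ℝ≥0∞}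

lemma memFunctionSpace_of_le (h : IsHolderPair μ ρ ρ') {f : X → ℂ} {F : X → ℝ≥0∞}
    (hf : Measurable f) (hF : ρ F ≠ ∞) (hle : ∀ x, ‖f x‖ₑ ≤ F x) : MemFunctionSpace ρ f :=
  ⟨hf, ne_top_of_le_ne_top hF (h.mono (ae_of_all _ hle))⟩

lemma memFunctionSpace_indicator (h : IsHolderPair μ ρ ρ') {f : X → ℂ} (hf : MemFunctionSpace ρ f)
    {s : Set X} (hs : MeasurableSet s) : MemFunctionSpace ρ (s.indicator f) :=
  h.memFunctionSpace_of_le (hf.measurable.indicator hs) hf.ne_top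
    (enorm_indicator_le_enorm_self f)

lemma const_mul_ne_top (h : IsHolderPair μ ρ ρ') {F : X → ℝ≥0∞} (hF : Measurable F)
    (hFtop : ρ F ≠ ∞) {c : ℝ≥0∞} (hc : c ≠ ∞) : ρ (fun x ↦ c * F x) ≠ ∞ :=
  ne_top_of_le_ne_top (mul_ne_top hc hFtop) (h.const_mul_le c hF)

lemma tendsto_zero_of_dominated (h : IsHolderPair μ ρ ρ') {ι : Type*} {l : Filter ι}
    [l.IsCountablyGenerated] {f : ι → X → ℝ≥0∞} {F : X → ℝ≥0∞} (hf : ∀ i, Measurable (f i))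
    (hF : ρ F ≠ ∞) (hle : ∀ i x, f i x ≤ F x) (hlim : ∀ᵐ x ∂μ, Tendsto (f · x) l (𝓝 0)) :
    Tendsto (fun i ↦ ρ (f i)) l (𝓝 0) := by
  refine tendsto_of_seq_tendsto fun u hu ↦ ?_
  let tail (n : ℕ) (x : X) : ℝ≥0∞ := ⨆ m ≥ n, f (u m) x
  have htail_anti : Antitone tail := fun m n hmn x ↦ biSup_mono fun _ hk ↦ hmn.trans hk
  have htail_top : ρ (tail 0) ≠ ∞ :=
    ne_top_of_le_ne_top hF (h.mono (ae_of_all _ fun x ↦ iSup₂_le fun m _ ↦ hle (u m) x))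
  have htail_lim : ∀ᵐ x ∂μ, Tendsto (tail · x) atTop (𝓝 0) := hlim.mono fun x hx ↦ by
    have hlimsup := (hx.comp hu).limsup_eq
    rw [limsup_eq_iInf_iSup_of_nat] at hlimsup
    exact hlimsup ▸ tendsto_atTop_iInf fun m n hmn ↦ htail_anti hmn x
  refine tendsto_of_tendsto_of_tendsto_of_le_of_le tendsto_const_nhds
    (h.tendsto_zero_of_antitone (fun n ↦ .iSup fun m ↦ .iSup fun _ ↦ hf (u m)) htail_anti
      htail_top htail_lim) (fun _ ↦ zero_le) fun n ↦ ?_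
  exact h.mono (ae_of_all _ fun x ↦ le_iSup₂ (f := fun m (_ : m ≥ n) ↦ f (u m) x) n le_rfl)

lemma enorm_integral_mul_le (h : IsHolderPair μ ρ ρ') {f g : X → ℂ} (hf : Measurable f)
    (hg : Measurable g) : ‖∫ x, f x * g x ∂μ‖ₑ ≤ ρ (‖f ·‖ₑ) * ρ' (‖g ·‖ₑ) := by
  refine (enorm_integral_le_lintegral_enorm _).trans ?_
  simp_rw [enorm_mul]
  exact h.lintegral_mul_le hf.enorm hg.enorm

lemma integrable_mul (h : IsHolderPair μ ρ ρ') {f g : X → ℂ} (hf : MemFunctionSpace ρ f)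
    (hg : MemFunctionSpace ρ' g) : Integrable (fun x ↦ f x * g x) μ := by
  refine ⟨(hf.measurable.mul hg.measurable).aestronglyMeasurable, ?_⟩
  simp_rw [HasFiniteIntegral, enorm_mul]
  exact (h.lintegral_mul_le hf.measurable.enorm hg.measurable.enorm).trans_lt
    (mul_lt_top hf.ne_top.lt_top hg.ne_top.lt_top)

end IsHolderPair

namespace IsBoundedFunctional

variable {μ : Measure X} {ρ ρ' : (X → ℝ≥0∞) → ℝ≥0∞} {T : (X → ℂ) → ℂ} {C : ℝ≥0}

lemma map_sub (hT : IsBoundedFunctional ρ T C) {f g : X → ℂ} (hf : MemFunctionSpace ρ f)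
    (hg : MemFunctionSpace ρ g) : T (f - g) = T f - T g := by
  have hneg : MemFunctionSpace ρ ((-1 : ℂ) • g) :=
    ⟨hg.measurable.const_smul _, by simpa using hg.ne_top⟩
  calc T (f - g) = T (f + (-1 : ℂ) • g) := by rw [neg_one_smul, sub_eq_add_neg]
    _ = T f - T g := by rw [hT.map_add hf hneg, hT.map_smul _ hg]; ring

lemma map_eq_zero_of_ae_eq (hT : IsBoundedFunctional ρ T C) (h : IsHolderPair μ ρ ρ') {f : X → ℂ}
    (hf : Measurable f) (hf0 : f =ᵐ[μ] 0) : T f = 0 := by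
  have hnorm : ρ (‖f ·‖ₑ) = 0 := by
    refine le_antisymm ?_ zero_le
    calc ρ (‖f ·‖ₑ) ≤ ρ fun x ↦ 0 * ‖f x‖ₑ := h.mono (hf0.mono fun x hx ↦ by simp [hx])
      _ ≤ 0 * ρ (‖f ·‖ₑ) := h.const_mul_le 0 hf.enorm
      _ = 0 := zero_mul _
  simpa [hnorm] using hT.enorm_map_le ⟨hf, by simp [hnorm]⟩

lemma tendsto_map_of_dominated (hT : IsBoundedFunctional ρ T C) (h : IsHolderPair μ ρ ρ')
    {ι : Type*} {l : Filter ι} [l.IsCountablyGenerated] {f : ι → X → ℂ} {g : X → ℂ} {F : X → ℝ≥0∞}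
    (hf : ∀ i, Measurable (f i)) (hg : Measurable g) (hF : Measurable F) (hFtop : ρ F ≠ ∞)
    (hfF : ∀ i x, ‖f i x‖ₑ ≤ F x) (hgF : ∀ x, ‖g x‖ₑ ≤ F x)
    (hlim : ∀ᵐ x ∂μ, Tendsto (f · x) l (𝓝 (g x))) : Tendsto (fun i ↦ T (f i)) l (𝓝 (T g)) := by
  have hfmem i : MemFunctionSpace ρ (f i) := h.memFunctionSpace_of_le (hf i) hFtop (hfF i)
  have hgmem : MemFunctionSpace ρ g := h.memFunctionSpace_of_le hg hFtop hgF
  have hsub i x : ‖(f i - g) x‖ₑ ≤ 2 * F x :=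
    enorm_sub_le.trans ((add_le_add (hfF i x) (hgF x)).trans_eq (two_mul _).symm)
  have htop : ρ (fun x ↦ 2 * F x) ≠ ∞ := h.const_mul_ne_top hF hFtop ofNat_ne_top
  have hnorm : Tendsto (fun i ↦ ρ (‖(f i - g) ·‖ₑ)) l (𝓝 0) :=
    h.tendsto_zero_of_dominated (fun i ↦ ((hf i).sub hg).enorm) htop hsub <| hlim.mono
      fun x hx ↦ tendsto_zero_iff_enorm_tendsto_zero.1 (tendsto_sub_nhds_zero_iff.2 hx)
  rw [← tendsto_sub_nhds_zero_iff, tendsto_zero_iff_enorm_tendsto_zero]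
  have hCnorm : Tendsto (fun i ↦ C * ρ (‖(f i - g) ·‖ₑ)) l (𝓝 0) := by
    simpa using ENNReal.Tendsto.const_mul (a := (C : ℝ≥0∞)) hnorm (.inr coe_ne_top)
  refine tendsto_of_tendsto_of_tendsto_of_le_of_le tendsto_const_nhds hCnorm
    (fun _ ↦ zero_le) fun i ↦ ?_
  rw [← hT.map_sub (hfmem i) hgmem]
  exact hT.enorm_map_le (h.memFunctionSpace_of_le ((hf i).sub hg) htop (hsub i))

lemma map_indicator_biUnion (hT : IsBoundedFunctional ρ T C) (h : IsHolderPair μ ρ ρ') {W : X → ℂ}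
    (hW : MemFunctionSpace ρ W) {ι : Type*} {A : ι → Set X} (hA : ∀ i, MeasurableSet (A i))
    (hdisj : Pairwise (Disjoint on A)) (s : Finset ι) :
    T ((⋃ i ∈ s, A i).indicator W) = ∑ i ∈ s, T ((A i).indicator W) := by
  classical
  induction s using Finset.induction_on with
  | empty =>
    exact hT.map_eq_zero_of_ae_eq h (hW.measurable.indicator (by simp)) (ae_of_all _ (by simp))
  | insert a s ha ih =>
    have hdisj' : Disjoint (A a) (⋃ i ∈ s, A i) :=
      Set.disjoint_iUnion₂_right.2 fun i hi ↦ hdisj (ne_of_mem_of_not_mem hi ha).symm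
    rw [Finset.sum_insert ha, ← ih, Finset.set_biUnion_insert,
      Set.indicator_union_of_disjoint hdisj']
    exact hT.map_add (h.memFunctionSpace_indicator hW (hA a))
      (h.memFunctionSpace_indicator hW (s.measurableSet_biUnion fun i _ ↦ hA i))

lemma hasSum_map_indicator (hT : IsBoundedFunctional ρ T C) (h : IsHolderPair μ ρ ρ') {W : X → ℂ}
    (hW : MemFunctionSpace ρ W) {ι : Type*} [Countable ι] {A : ι → Set X}
    (hA : ∀ i, MeasurableSet (A i)) (hdisj : Pairwise (Disjoint on A)) :
    HasSum (fun i ↦ T ((A i).indicator W)) (T ((⋃ i, A i).indicator W)) := by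
  refine Tendsto.congr (hT.map_indicator_biUnion h hW hA hdisj) ?_
  rw [SummationFilter.unconditional_filter]
  exact hT.tendsto_map_of_dominated h
    (fun s ↦ hW.measurable.indicator (s.measurableSet_biUnion fun i _ ↦ hA i))
    (hW.measurable.indicator (.iUnion hA)) hW.measurable.enorm hW.ne_top
    (fun _ ↦ enorm_indicator_le_enorm_self W) (enorm_indicator_le_enorm_self W)
    (ae_of_all _ fun x ↦ (tendsto_indicator_biUnion_finset A W x).mono_right (pure_le_nhds _))

lemma exists_complexMeasure_apply_eq (hT : IsBoundedFunctional ρ T C) (h : IsHolderPair μ ρ ρ')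
    {W : X → ℂ} (hW : MemFunctionSpace ρ W) :
    ∃ ν : ComplexMeasure X, ∀ A, MeasurableSet A → ν A = T (A.indicator W) := by
  classical
  refine ⟨⟨fun A ↦ if MeasurableSet A then T (A.indicator W) else 0, ?_, fun A hA ↦ if_neg hA,
    fun A hA hdisj ↦ ?_⟩, fun A hA ↦ if_pos hA⟩
  · rw [if_pos .empty]
    exact hT.map_eq_zero_of_ae_eq h (hW.measurable.indicator .empty) (ae_of_all _ (by simp))
  · simpa only [hA, MeasurableSet.iUnion hA, if_true] using hT.hasSum_map_indicator h hW hA hdisj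

end IsBoundedFunctional

lemma exists_integrable_forall_setIntegral_eq {μ : Measure X} [SigmaFinite μ]
    {ν : ComplexMeasure X} (hν : ν ≪ᵥ μ.toENNRealVectorMeasure) :
    ∃ k : X → ℂ, Measurable k ∧ Integrable k μ ∧
      ∀ A, MeasurableSet A → ν A = ∫ x in A, k x ∂μ := by
  obtain ⟨hre, him⟩ := (ComplexMeasure.absolutelyContinuous_ennreal_iff _ _).1 hν
  have hk : Integrable (ν.rnDeriv μ) μ := ν.integrable_rnDeriv μ
  refine ⟨ν.rnDeriv μ, measurable_of_re_im (SignedMeasure.measurable_rnDeriv _ _)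
    (SignedMeasure.measurable_rnDeriv _ _), hk, fun A hA ↦ ?_⟩
  have hre_apply : ∫ x in A, (ν.rnDeriv μ x).re ∂μ = (ν A).re := by
    change _ = ComplexMeasure.re ν A
    rw [← SignedMeasure.withDensityᵥ_rnDeriv_eq _ μ hre,
      withDensityᵥ_apply (SignedMeasure.integrable_rnDeriv _ _) hA]
    rfl
  have him_apply : ∫ x in A, (ν.rnDeriv μ x).im ∂μ = (ν A).im := by
    change _ = ComplexMeasure.im ν A
    rw [← SignedMeasure.withDensityᵥ_rnDeriv_eq _ μ him,
      withDensityᵥ_apply (SignedMeasure.integrable_rnDeriv _ _) hA]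
    rfl
  calc ν A = ((ν A).re : ℂ) + (ν A).im * Complex.I := (Complex.re_add_im _).symm
    _ = ((∫ x in A, (ν.rnDeriv μ x).re ∂μ : ℝ) : ℂ) +
        (∫ x in A, (ν.rnDeriv μ x).im ∂μ : ℝ) * Complex.I := by rw [hre_apply, him_apply]
    _ = ∫ x in A, ν.rnDeriv μ x ∂μ := setIntegral_re_add_im hk.integrableOn

namespace IsBoundedFunctional

variable {μ : Measure X} {ρ ρ' : (X → ℝ≥0∞) → ℝ≥0∞} {T : (X → ℂ) → ℂ} {C : ℝ≥0} {W : X → ℂ}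

lemma exists_forall_map_indicator_eq_setIntegral [SigmaFinite μ] (hT : IsBoundedFunctional ρ T C)
    (h : IsHolderPair μ ρ ρ') (hW : MemFunctionSpace ρ W) (hW0 : ∀ x, W x ≠ 0) :
    ∃ g : X → ℂ, Measurable g ∧ Integrable (fun x ↦ W x * g x) μ ∧
      ∀ A, MeasurableSet A → T (A.indicator W) = ∫ x in A, W x * g x ∂μ := by
  obtain ⟨ν, hν⟩ := hT.exists_complexMeasure_apply_eq h hW
  have hac : ν ≪ᵥ μ.toENNRealVectorMeasure := .mk fun A hA hA0 ↦ by
    rw [Measure.toENNRealVectorMeasure_apply_measurable hA] at hA0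
    rw [hν A hA]
    exact hT.map_eq_zero_of_ae_eq h (hW.measurable.indicator hA) (indicator_meas_zero hA0)
  obtain ⟨k, hk, hkint, hkν⟩ := exists_integrable_forall_setIntegral_eq hac
  have hmul x : W x * (k x / W x) = k x := mul_div_cancel₀ _ (hW0 x)
  refine ⟨fun x ↦ k x / W x, hk.div hW.measurable, ?_, fun A hA ↦ ?_⟩
  · simpa only [hmul] using hkint
  · simp only [hmul, ← hkν A hA, hν A hA]

lemma map_simpleFunc_mul (hT : IsBoundedFunctional ρ T C) (h : IsHolderPair μ ρ ρ')
    (hW : MemFunctionSpace ρ W) {k : X → ℂ} (hk : Integrable k μ)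
    (hTk : ∀ A, MeasurableSet A → T (A.indicator W) = ∫ x in A, k x ∂μ) (φ : SimpleFunc X ℂ) :
    T (fun x ↦ φ x * W x) = ∫ x, φ x * k x ∂μ := by
  have hmem (φ : SimpleFunc X ℂ) : MemFunctionSpace ρ fun x ↦ φ x * W x := by
    obtain ⟨c, hc⟩ := φ.exists_forall_norm_le
    refine h.memFunctionSpace_of_le (φ.measurable.mul hW.measurable)
      (h.const_mul_ne_top hW.measurable.enorm hW.ne_top (ofReal_ne_top (r := c))) fun x ↦ ?_
    rw [enorm_mul, ← ofReal_norm (φ x)]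
    gcongr
    exact hc x
  have hint (φ : SimpleFunc X ℂ) : Integrable (fun x ↦ φ x * k x) μ :=
    let ⟨_, hc⟩ := φ.exists_forall_norm_le
    hk.bdd_mul φ.aestronglyMeasurable (ae_of_all _ hc)
  induction φ using SimpleFunc.induction with
  | @const c s hs =>
    have hpiecewise (v : X → ℂ) : (fun x ↦ SimpleFunc.piecewise s hs (.const X c) (.const X 0) x
        * v x) = c • s.indicator v := by
      ext x
      by_cases hx : x ∈ s <;> simp [hx]
    rw [hpiecewise, hpiecewise, hT.map_smul c (h.memFunctionSpace_indicator hW hs), hTk s hs,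
      ← integral_indicator hs]
    exact (integral_const_mul c _).symm
  | @add φ ψ _ hφ hψ =>
    simp only [SimpleFunc.coe_add, Pi.add_apply, add_mul]
    rw [integral_add (hint φ) (hint ψ), ← hφ, ← hψ]
    exact hT.map_add (hmem φ) (hmem ψ)

lemma map_eq_integral_of_integrable (hT : IsBoundedFunctional ρ T C) (h : IsHolderPair μ ρ ρ')
    (hW : MemFunctionSpace ρ W) (hW0 : ∀ x, W x ≠ 0) {g : X → ℂ}
    (hWg : Integrable (fun x ↦ W x * g x) μ)
    (hTg : ∀ A, MeasurableSet A → T (A.indicator W) = ∫ x in A, W x * g x ∂μ) {f : X → ℂ}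
    (hf : MemFunctionSpace ρ f) (hfg : Integrable (fun x ↦ f x * g x) μ) :
    T f = ∫ x, f x * g x ∂μ := by
  have hdiv : Measurable fun x ↦ f x / W x := hf.measurable.div hW.measurable
  let φ : ℕ → SimpleFunc X ℂ := SimpleFunc.approxOn _ hdiv .univ 0 (Set.mem_univ _)
  have hφlim x : Tendsto (fun n ↦ φ n x * W x) atTop (𝓝 (f x)) := by
    rw [← div_mul_cancel₀ (f x) (hW0 x)]
    exact (SimpleFunc.tendsto_approxOn hdiv (Set.mem_univ _) (by simp)).mul_const _
  have hφle n x : ‖φ n x * W x‖ ≤ 2 * ‖f x‖ := by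
    calc ‖φ n x * W x‖ ≤ (‖f x / W x‖ + ‖f x / W x‖) * ‖W x‖ := by
          rw [norm_mul]
          gcongr
          exact SimpleFunc.norm_approxOn_zero_le hdiv _ x n
      _ = 2 * ‖f x / W x * W x‖ := by rw [norm_mul]; ring
      _ = 2 * ‖f x‖ := by rw [div_mul_cancel₀ _ (hW0 x)]
  have hmapT : Tendsto (fun n ↦ T fun x ↦ φ n x * W x) atTop (𝓝 (T f)) := by
    refine hT.tendsto_map_of_dominated h (fun n ↦ (φ n).measurable.mul hW.measurable) hf.measurable
      (hf.measurable.enorm.const_mul 2) (h.const_mul_ne_top hf.measurable.enorm hf.ne_top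
      ofNat_ne_top) (fun n x ↦ ?_) (fun x ↦ le_mul_of_one_le_left' one_le_two) (ae_of_all _ hφlim)
    simpa [← ofReal_norm, ENNReal.ofReal_mul] using ENNReal.ofReal_le_ofReal (hφle n x)
  have hmapint : Tendsto (fun n ↦ ∫ x, φ n x * (W x * g x) ∂μ) atTop (𝓝 (∫ x, f x * g x ∂μ)) := by
    simp only [← mul_assoc]
    refine tendsto_integral_of_dominated_convergence (fun x ↦ 2 * ‖f x * g x‖) (fun n ↦ ?_)
      (hfg.norm.const_mul 2) (fun n ↦ ae_of_all _ fun x ↦ ?_)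
      (ae_of_all _ fun x ↦ (hφlim x).mul_const _)
    · simpa only [mul_assoc] using (φ n).aestronglyMeasurable.fun_mul hWg.aestronglyMeasurable
    · rw [norm_mul, norm_mul (f x), ← mul_assoc]
      gcongr
      exact hφle n x
  exact tendsto_nhds_unique hmapT
    (hmapint.congr fun n ↦ (hT.map_simpleFunc_mul h hW hWg hTg (φ n)).symm)

end IsBoundedFunctional

/-! ### The dual of a function space -/

lemma exists_enorm_le_enorm_integral_mul_eq {μ : Measure X} {u : X → ℝ≥0∞} {g : X → ℂ}
    (hu : Measurable u) (hg : Measurable g) (hfin : ∫⁻ x, u x * ‖g x‖ₑ ∂μ ≠ ∞) :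
    ∃ f : X → ℂ, Measurable f ∧ (∀ x, ‖f x‖ₑ ≤ u x) ∧
      ‖∫ x, f x * g x ∂μ‖ₑ = ∫⁻ x, u x * ‖g x‖ₑ ∂μ := by
  have hug : Measurable fun x ↦ u x * ‖g x‖ₑ := hu.mul hg.enorm
  refine ⟨fun x ↦ ((u x).toReal : ℂ) * (starRingEnd ℂ (g x) / (‖g x‖ : ℂ)), by fun_prop,
    fun x ↦ ?_, ?_⟩
  · have hphase : ‖starRingEnd ℂ (g x) / (‖g x‖ : ℂ)‖ ≤ 1 := by
      simpa using div_self_le_one ‖g x‖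
    rw [enorm_mul, ← ofReal_norm (_ / _)]
    calc ‖((u x).toReal : ℂ)‖ₑ * ENNReal.ofReal ‖starRingEnd ℂ (g x) / (‖g x‖ : ℂ)‖
        ≤ u x * 1 := by
          gcongr
          · simp [← ofReal_norm, ofReal_toReal_le]
          · exact ofReal_le_one.2 hphase
      _ = u x := mul_one _
  · have hmul x : ((u x).toReal : ℂ) * (starRingEnd ℂ (g x) / (‖g x‖ : ℂ)) * g x
        = ((u x * ‖g x‖ₑ).toReal : ℂ) := by
      rw [mul_assoc, div_mul_eq_mul_div, Complex.conj_mul', sq, mul_self_div_self,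
        ENNReal.toReal_mul, toReal_enorm, Complex.ofReal_mul]
    simp_rw [hmul]
    rw [integral_complex_ofReal, integral_toReal hug.aemeasurable (ae_lt_top hug hfin),
      ← ofReal_norm, Complex.norm_real, Real.norm_of_nonneg toReal_nonneg, ofReal_toReal hfin]

lemma IsBoundedFunctional.lintegral_mul_enorm_le {μ : Measure X} {ρ ρ' : (X → ℝ≥0∞) → ℝ≥0∞}
    {T : (X → ℂ) → ℂ} {C : ℝ≥0} (hT : IsBoundedFunctional ρ T C) (h : IsHolderPair μ ρ ρ')
    {u : X → ℝ≥0∞} (hu : Measurable u) (hu1 : ρ u ≤ 1) {g : X → ℂ} (hg : Measurable g)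
    (hfin : ∫⁻ x, u x * ‖g x‖ₑ ∂μ ≠ ∞)
    (hTg : ∀ f, MemFunctionSpace ρ f → Integrable (fun x ↦ f x * g x) μ →
      T f = ∫ x, f x * g x ∂μ) : ∫⁻ x, u x * ‖g x‖ₑ ∂μ ≤ C := by
  obtain ⟨f, hf, hfu, hfg⟩ := exists_enorm_le_enorm_integral_mul_eq hu hg hfin
  have hf1 : ρ (‖f ·‖ₑ) ≤ 1 := (h.mono (ae_of_all _ hfu)).trans hu1
  have hfmem : MemFunctionSpace ρ f := ⟨hf, ne_top_of_le_ne_top one_ne_top hf1⟩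
  have hfgint : Integrable (fun x ↦ f x * g x) μ := by
    refine ⟨(hf.mul hg).aestronglyMeasurable, (lintegral_mono fun x ↦ ?_).trans_lt hfin.lt_top⟩
    rw [enorm_mul]
    gcongr
    exact hfu x
  rw [← hfg, ← hTg f hfmem hfgint]
  exact (hT.enorm_map_le hfmem).trans (mul_le_of_le_one_right' hf1)

namespace IsKotheDualPair

variable {μ : Measure X} {ρ ρ' : (X → ℝ≥0∞) → ℝ≥0∞}

lemma dual_enorm_eq_iSup (h : IsKotheDualPair μ ρ ρ') {g : X → ℂ} (hg : MemFunctionSpace ρ' g) :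
    ρ' (‖g ·‖ₑ) =
      ⨆ (f : X → ℂ) (_ : Measurable f) (_ : ρ (‖f ·‖ₑ) ≤ 1), ‖∫ x, f x * g x ∂μ‖ₑ := by
  refine le_antisymm (h.dual_le hg.measurable.enorm fun u hu hu1 ↦ ?_)
    (iSup₂_le fun f hf ↦ iSup_le fun hf1 ↦ ?_)
  · have hfin : ∫⁻ x, u x * ‖g x‖ₑ ∂μ ≠ ∞ :=
      ne_top_of_le_ne_top (mul_ne_top (ne_top_of_le_ne_top one_ne_top hu1) hg.ne_top)
        (h.lintegral_mul_le hu hg.measurable.enorm)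
    obtain ⟨f, hf, hfu, hfg⟩ := exists_enorm_le_enorm_integral_mul_eq hu hg.measurable hfin
    exact hfg ▸ le_iSup₂_of_le f hf
      (le_iSup_of_le ((h.mono (ae_of_all _ hfu)).trans hu1) le_rfl)
  · exact (h.enorm_integral_mul_le hf hg.measurable).trans (mul_le_of_le_one_left' hf1)

lemma exists_memFunctionSpace_ne_zero (h : IsKotheDualPair μ ρ ρ') :
    ∃ W : X → ℂ, MemFunctionSpace ρ W ∧ ∀ x, W x ≠ 0 := by
  obtain ⟨w, hw, hpos, hw1⟩ := h.exists_weight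
  refine ⟨fun x ↦ ((w x : ℝ) : ℂ), ⟨by fun_prop, ?_⟩, fun x ↦ by simpa using (hpos x).ne'⟩
  have henorm x : ‖((w x : ℝ) : ℂ)‖ₑ = w x := by simp [← ofReal_norm]
  simpa only [henorm] using ne_top_of_le_ne_top one_ne_top hw1

lemma ae_eq_of_forall_integral_mul_eq (h : IsKotheDualPair μ ρ ρ') {g g' : X → ℂ}
    (hg : MemFunctionSpace ρ' g) (hg' : MemFunctionSpace ρ' g')
    (heq : ∀ f, MemFunctionSpace ρ f → ∫ x, f x * g x ∂μ = ∫ x, f x * g' x ∂μ) : g =ᵐ[μ] g' := by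
  obtain ⟨W, hW, hW0⟩ := h.exists_memFunctionSpace_ne_zero
  have hmul : (fun x ↦ W x * g x) =ᵐ[μ] fun x ↦ W x * g' x := by
    refine Integrable.ae_eq_of_forall_setIntegral_eq _ _ (h.integrable_mul hW hg)
      (h.integrable_mul hW hg') fun A hA _ ↦ ?_
    simpa only [← Set.indicator_mul_left, integral_indicator hA] using
      heq _ (h.memFunctionSpace_indicator hW hA)
  exact hmul.mono fun x hx ↦ mul_left_cancel₀ (hW0 x) hx

lemma dual_enorm_le_of_forall_map_eq (h : IsKotheDualPair μ ρ ρ') {T : (X → ℂ) → ℂ} {C : ℝ≥0}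
    (hT : IsBoundedFunctional ρ T C) {W g : X → ℂ} (hW : Measurable W) (hW0 : ∀ x, W x ≠ 0)
    (hg : Measurable g) (hWg : Integrable (fun x ↦ W x * g x) μ)
    (hTg : ∀ f, MemFunctionSpace ρ f → Integrable (fun x ↦ f x * g x) μ →
      T f = ∫ x, f x * g x ∂μ) : ρ' (‖g ·‖ₑ) ≤ C := by
  refine h.dual_le hg.enorm fun u hu hu1 ↦ ?_
  let v (n : ℕ) (x : X) : ℝ≥0∞ := min (u x) (n * ‖W x‖ₑ)
  have hv n : Measurable (v n) := hu.min (hW.enorm.const_mul _)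
  have hv_mono : Monotone v := fun m n hmn x ↦ by dsimp only [v]; gcongr
  have hv_iSup x : ⨆ n, v n x = u x := iSup_min_natCast_mul _ (by simpa using hW0 x)
  have hv_top n : ∫⁻ x, v n x * ‖g x‖ₑ ∂μ ≠ ∞ := by
    refine ne_top_of_le_ne_top (mul_ne_top (natCast_ne_top n) hWg.2.ne) ?_
    rw [← lintegral_const_mul _ (hW.fun_mul hg).enorm]
    refine lintegral_mono fun x ↦ ?_
    rw [enorm_mul, ← mul_assoc]
    gcongr
    exact min_le_right _ _
  have hvC n : ∫⁻ x, v n x * ‖g x‖ₑ ∂μ ≤ C :=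
    hT.lintegral_mul_enorm_le h.toIsHolderPair (hv n)
      ((h.mono (ae_of_all _ fun x ↦ min_le_left _ _)).trans hu1) hg (hv_top n) hTg
  calc ∫⁻ x, u x * ‖g x‖ₑ ∂μ = ∫⁻ x, ⨆ n, v n x * ‖g x‖ₑ ∂μ := by
        simp_rw [← ENNReal.iSup_mul, hv_iSup]
    _ = ⨆ n, ∫⁻ x, v n x * ‖g x‖ₑ ∂μ :=
        lintegral_iSup (fun n ↦ (hv n).mul hg.enorm) fun m n hmn x ↦ by
          dsimp only; gcongr; exact hv_mono hmn x
    _ ≤ C := iSup_le hvC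

lemma exists_forall_map_eq_integral [SigmaFinite μ] (h : IsKotheDualPair μ ρ ρ')
    {T : (X → ℂ) → ℂ} {C : ℝ≥0} (hT : IsBoundedFunctional ρ T C) :
    ∃ g, MemFunctionSpace ρ' g ∧ ∀ f, MemFunctionSpace ρ f → T f = ∫ x, f x * g x ∂μ := by
  obtain ⟨W, hW, hW0⟩ := h.exists_memFunctionSpace_ne_zero
  obtain ⟨g, hg, hWg, hTWg⟩ :=
    hT.exists_forall_map_indicator_eq_setIntegral h.toIsHolderPair hW hW0
  have hTg f (hf : MemFunctionSpace ρ f) (hfg : Integrable (fun x ↦ f x * g x) μ) :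
      T f = ∫ x, f x * g x ∂μ :=
    hT.map_eq_integral_of_integrable h.toIsHolderPair hW hW0 hWg hTWg hf hfg
  have hgmem : MemFunctionSpace ρ' g := ⟨hg, ne_top_of_le_ne_top coe_ne_top
    (h.dual_enorm_le_of_forall_map_eq hT hW.measurable hW0 hg hWg hTg)⟩
  exact ⟨g, hgmem, fun f hf ↦ hTg f hf (h.integrable_mul hf hgmem)⟩

end IsKotheDualPair

/-- duality of mixed-norm Herz spaces. -/
theorem mixedHerz_dual (n : ℕ) (α : Fin n → ℝ) (p q p' q' : Fin n → ℝ≥0∞)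
    (hp : ∀ i, 1 ≤ p i ∧ p i ≠ ∞) (hq : ∀ i, 1 ≤ q i ∧ q i ≠ ∞)
    (hp' : ∀ i, 1 / p i + 1 / p' i = 1) (hq' : ∀ i, 1 / q i + 1 / q' i = 1) :
    (∀ g : (Fin n → ℝ) → ℂ, Measurable g → herzNormC n (-α) p' q' g ≠ ∞ →
      ∀ f : (Fin n → ℝ) → ℂ, Measurable f →
        (‖∫ x, f x * g x‖₊ : ℝ≥0∞) ≤ herzNormC n α p q f * herzNormC n (-α) p' q' g) ∧
    (∀ T : ((Fin n → ℝ) → ℂ) → ℂ,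
      (∀ f g : (Fin n → ℝ) → ℂ, Measurable f → herzNormC n α p q f ≠ ∞ →
        Measurable g → herzNormC n α p q g ≠ ∞ → T (f + g) = T f + T g) →
      (∀ (c : ℂ) (f : (Fin n → ℝ) → ℂ), Measurable f → herzNormC n α p q f ≠ ∞ →
        T (c • f) = c * T f) →
      (∃ C : ℝ≥0∞, C ≠ ∞ ∧ ∀ f : (Fin n → ℝ) → ℂ, Measurable f →
        herzNormC n α p q f ≠ ∞ → (‖T f‖₊ : ℝ≥0∞) ≤ C * herzNormC n α p q f) →
      ∃ g : (Fin n → ℝ) → ℂ, Measurable g ∧ herzNormC n (-α) p' q' g ≠ ∞ ∧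
        (∀ f : (Fin n → ℝ) → ℂ, Measurable f → herzNormC n α p q f ≠ ∞ →
          T f = ∫ x, f x * g x) ∧
        ∀ g' : (Fin n → ℝ) → ℂ, Measurable g' → herzNormC n (-α) p' q' g' ≠ ∞ →
          (∀ f : (Fin n → ℝ) → ℂ, Measurable f → herzNormC n α p q f ≠ ∞ →
            T f = ∫ x, f x * g' x) → g' =ᵐ[volume] g) ∧
    (∀ g : (Fin n → ℝ) → ℂ, Measurable g → herzNormC n (-α) p' q' g ≠ ∞ →
      herzNormC n (-α) p' q' g =
        ⨆ (f : (Fin n → ℝ) → ℂ) (_ : Measurable f) (_ : herzNormC n α p q f ≤ 1),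
          (‖∫ x, f x * g x‖₊ : ℝ≥0∞)) := by
  have : ∀ i, ENNReal.HolderConjugate (p i) (p' i) := fun i ↦
    ENNReal.holderConjugate_iff.2 (by simpa only [one_div] using hp' i)
  have : ∀ i, ENNReal.HolderConjugate (q i) (q' i) := fun i ↦
    ENNReal.holderConjugate_iff.2 (by simpa only [one_div] using hq' i)
  have h : IsKotheDualPair volume (mixedHerzNormE n α p q) (mixedHerzNormE n (-α) p' q') :=
    (isKotheDualField_mixedHerzNormE n α p q p' q' (fun i ↦ (hp i).2)
      fun i ↦ (hq i).2).isKotheDualPair ()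
  refine ⟨fun g hg _ f hf ↦ h.enorm_integral_mul_le hf hg, fun T hadd hsmul ⟨C, hC, hbound⟩ ↦ ?_,
    fun g hg hfin ↦ h.dual_enorm_eq_iSup ⟨hg, hfin⟩⟩
  lift C to ℝ≥0 using hC
  have hT : IsBoundedFunctional (mixedHerzNormE n α p q) T C :=
    ⟨fun f g hf hg ↦ hadd f g hf.measurable hf.ne_top hg.measurable hg.ne_top,
      fun c f hf ↦ hsmul c f hf.measurable hf.ne_top, fun f hf ↦ hbound f hf.measurable hf.ne_top⟩
  obtain ⟨g, hg, hgT⟩ := h.exists_forall_map_eq_integral hT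
  exact ⟨g, hg.measurable, hg.ne_top, fun f hf hfin ↦ hgT f ⟨hf, hfin⟩, fun g' hg' hfin' hg'T ↦
    h.ae_eq_of_forall_integral_mul_eq ⟨hg', hfin'⟩ hg fun f hf ↦
      (hg'T f hf.measurable hf.ne_top).symm.trans (hgT f hf)⟩
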